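/- arXiv:1802.03437 — 3 statements merged into one kernel-verified Lean document; each statement's English description precedes it below -/
import Mathlib

section
/- Let Q be a primitive positive-definite quaternary integer-valued quadratic form with Gram matrix A, let p be an odd prime, and let n be a positive integer. If there exists x ∈ ℤ⁴ with Q(x) ≡ n (mod p) and Ax ≢ 0 (mod p), then the local density β_p(Q;n) exists and satisfies β_p(Q;n) ≥ 1 − 1/p. -/
open scoped BigOperators

/-- Value of the quadratic form with Gram matrix `A` (symmetric, even diagonal)
over any commutative ring: `Q(x) = ∑ (aᵢᵢ/2) xᵢ² + ∑_{i<j} aᵢⱼ xᵢ xⱼ`. -/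
def Qval {R : Type*} [CommRing R] (A : Matrix (Fin 4) (Fin 4) ℤ) (x : Fin 4 → R) : R :=
  (∑ i, ((A i i / 2 : ℤ) : R) * x i ^ 2) +
    ∑ i, ∑ j ∈ Finset.Ioi i, ((A i j : ℤ) : R) * (x i * x j)

/-- `A` is the Gram matrix of an integer-valued quadratic form. -/
def IsGram (A : Matrix (Fin 4) (Fin 4) ℤ) : Prop :=
  A.IsSymm ∧ ∀ i, 2 ∣ A i i

/-- The form is primitive: the gcd of its coefficients is 1. -/
def IsPrimitiveQF (A : Matrix (Fin 4) (Fin 4) ℤ) : Prop :=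
  ∀ d : ℤ, (∀ i, d ∣ A i i / 2) → (∀ i j, i ≠ j → d ∣ A i j) → IsUnit d

/-- The form is positive definite. -/
def PosDefQF (A : Matrix (Fin 4) (Fin 4) ℤ) : Prop :=
  (A.map (Int.cast : ℤ → ℝ)).PosDef

/-- `N` is the level of the form with Gram matrix `A`: the smallest positive integer
such that `N • A⁻¹` has integer entries and even diagonal. -/
def IsLevel (A : Matrix (Fin 4) (Fin 4) ℤ) (N : ℕ) : Prop :=
  0 < N ∧
    (∃ B : Matrix (Fin 4) (Fin 4) ℤ,
      B.map (Int.cast : ℤ → ℚ) = (N : ℚ) • (A.map (Int.cast : ℤ → ℚ))⁻¹ ∧ ∀ i, 2 ∣ B i i) ∧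
    ∀ M : ℕ, 0 < M →
      (∃ B : Matrix (Fin 4) (Fin 4) ℤ,
        B.map (Int.cast : ℤ → ℚ) = (M : ℚ) • (A.map (Int.cast : ℤ → ℚ))⁻¹ ∧ ∀ i, 2 ∣ B i i) →
      N ≤ M

/-- `n` is represented by the form over `ℤ`. -/
def Represented (A : Matrix (Fin 4) (Fin 4) ℤ) (n : ℕ) : Prop :=
  ∃ x : Fin 4 → ℤ, Qval A x = (n : ℤ)

/-- `n` is locally represented: representable over `ℤ_p` for every prime `p`. -/
def LocallyRepresented (A : Matrix (Fin 4) (Fin 4) ℤ) (n : ℕ) : Prop :=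
  ∀ (p : ℕ) [Fact p.Prime], ∃ x : Fin 4 → ℤ_[p], Qval A x = (n : ℤ_[p])

/-- Number of solutions of `Q(x) ≡ n mod p^k`. -/
noncomputable def localCount (A : Matrix (Fin 4) (Fin 4) ℤ) (p n k : ℕ) : ℕ :=
  Nat.card {x : Fin 4 → ZMod (p ^ k) // Qval A x = (n : ZMod (p ^ k))}

/-- The local density `β_p(Q;n)` exists and is at least `c`. -/
def DensityBound (A : Matrix (Fin 4) (Fin 4) ℤ) (p n : ℕ) (c : ℝ) : Prop :=
  ∃ β : ℝ,
    Filter.Tendsto (fun k => (localCount A p n k : ℝ) / (p : ℝ) ^ (3 * k))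
      Filter.atTop (nhds β) ∧ c ≤ β



/-- The bilinear form attached to the Gram matrix. -/
def Bval {R : Type*} [CommRing R] (A : Matrix (Fin 4) (Fin 4) ℤ) (x y : Fin 4 → R) : R :=
  ∑ j, (∑ i, ((A i j : ℤ) : R) * x i) * y j

lemma ioi_sum {R : Type*} [CommRing R] (f : Fin 4 → Fin 4 → R) :
    ∑ i, ∑ j ∈ Finset.Ioi i, f i j =
      f 0 1 + f 0 2 + f 0 3 + f 1 2 + f 1 3 + f 2 3 := by
  have h0 : Finset.Ioi (0 : Fin 4) = {1, 2, 3} := by decide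
  have h1 : Finset.Ioi (1 : Fin 4) = {2, 3} := by decide
  have h2 : Finset.Ioi (2 : Fin 4) = {3} := by decide
  have h3 : Finset.Ioi (3 : Fin 4) = ∅ := by decide
  rw [Fin.sum_univ_four, h0, h1, h2, h3]
  simp
  ring

lemma Qval_add {R : Type*} [CommRing R] (A : Matrix (Fin 4) (Fin 4) ℤ) (hA : IsGram A)
    (x y : Fin 4 → R) (t : R) :
    Qval A (fun i => x i + t * y i) = Qval A x + t * Bval A x y + t ^ 2 * Qval A y := by
  obtain ⟨hs, hd⟩ := hA
  have hdiag : ∀ i, ((A i i : ℤ) : R) = 2 * ((A i i / 2 : ℤ) : R) := by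
    intro i
    conv_lhs => rw [← Int.mul_ediv_cancel' (hd i)]
    push_cast
    rfl
  unfold Qval Bval
  simp only [ioi_sum]
  simp only [Fin.sum_univ_four, hdiag]
  rw [hs.apply 0 1, hs.apply 0 2, hs.apply 0 3, hs.apply 1 2, hs.apply 1 3, hs.apply 2 3]
  ring

lemma Bval_comm {R : Type*} [CommRing R] (A : Matrix (Fin 4) (Fin 4) ℤ) (hA : IsGram A)
    (x y : Fin 4 → R) : Bval A x y = Bval A y x := by
  obtain ⟨hs, hd⟩ := hA
  unfold Bval
  simp only [Fin.sum_univ_four]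
  rw [hs.apply 0 1, hs.apply 0 2, hs.apply 0 3, hs.apply 1 2, hs.apply 1 3, hs.apply 2 3]
  ring

lemma Qval_smul {R : Type*} [CommRing R] (A : Matrix (Fin 4) (Fin 4) ℤ)
    (x : Fin 4 → R) (t : R) : Qval A (fun i => t * x i) = t ^ 2 * Qval A x := by
  unfold Qval
  simp only [ioi_sum]
  simp only [Fin.sum_univ_four]
  ring

lemma Qval_map {R S : Type*} [CommRing R] [CommRing S] (f : R →+* S)
    (A : Matrix (Fin 4) (Fin 4) ℤ) (x : Fin 4 → R) :
    f (Qval A x) = Qval A (fun i => f (x i)) := by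
  simp [Qval, map_sum]

lemma Bval_map {R S : Type*} [CommRing R] [CommRing S] (f : R →+* S)
    (A : Matrix (Fin 4) (Fin 4) ℤ) (x y : Fin 4 → R) :
    f (Bval A x y) = Bval A (fun i => f (x i)) (fun i => f (y i)) := by
  simp [Bval, map_sum]

/-- Counting preimages under a surjective homomorphism of finite groups. -/
lemma card_preimage {G H : Type*} [AddGroup G] [AddGroup H] [Finite G] [Finite H]
    (f : G →+ H) (hf : Function.Surjective f) (P : H → Prop) :
    Nat.card H * Nat.card {x : G // P (f x)} = Nat.card G * Nat.card {y : H // P y} := by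
  classical
  have := Fintype.ofFinite G
  have := Fintype.ofFinite H
  have key : ∀ P : H → Prop, Nat.card {x : G // P (f x)} =
      Nat.card {y : H // P y} * (Finset.univ.filter (fun g : G => f g = 0)).card := by
    intro P
    rw [Nat.card_eq_fintype_card, Nat.card_eq_fintype_card, Fintype.card_subtype,
      Fintype.card_subtype]
    rw [Finset.card_eq_sum_card_fiberwise (f := f) (t := Finset.univ.filter P)]
    · rw [Finset.sum_const_nat]
      intro y hy
      rw [← AddMonoidHom.card_fiber_eq_of_mem_range f (x := y) (y := 0) (hf y) (hf 0)]
      congr 1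
      ext g
      simp only [Finset.mem_filter, Finset.mem_univ, true_and] at hy ⊢
      constructor
      · rintro ⟨_, h⟩; exact h
      · intro h; exact ⟨h ▸ hy, h⟩
    · intro x hx
      simpa using hx
  have h1 := key P
  have h2 := key (fun _ => True)
  have e1 : Nat.card {x : G // True} = Nat.card G := Nat.card_congr (Equiv.subtypeUnivEquiv (by simp))
  have e2 : Nat.card {x : H // True} = Nat.card H := Nat.card_congr (Equiv.subtypeUnivEquiv (by simp))
  rw [e1, e2] at h2
  rw [h1, h2]
  ring

/-- A linear form with values in `S`, surjective as soon as it hits a unit. -/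
def BHom {R S : Type*} [CommRing R] [CommRing S] (f : R →+* S)
    (A : Matrix (Fin 4) (Fin 4) ℤ) (v : Fin 4 → R) : (Fin 4 → R) →+ S where
  toFun x := f (Bval A x v)
  map_zero' := by simp [Bval]
  map_add' x y := by
    rw [← map_add]
    congr 1
    simp only [Bval, Fin.sum_univ_four, Pi.add_apply]
    ring

lemma Bval_smul_left {R : Type*} [CommRing R] (A : Matrix (Fin 4) (Fin 4) ℤ)
    (x y : Fin 4 → R) (t : R) : Bval A (fun i => t * x i) y = t * Bval A x y := by
  simp only [Bval, Fin.sum_univ_four]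
  ring

lemma Bval_add_left {R : Type*} [CommRing R] (A : Matrix (Fin 4) (Fin 4) ℤ)
    (x z y : Fin 4 → R) (t : R) :
    Bval A (fun i => x i + t * z i) y = Bval A x y + t * Bval A z y := by
  simp only [Bval, Fin.sum_univ_four]
  ring

lemma BHom_surj {R S : Type*} [CommRing R] [CommRing S] (f : R →+* S)
    (hf : Function.Surjective f)
    (A : Matrix (Fin 4) (Fin 4) ℤ) (v : Fin 4 → R) (w : Fin 4 → R)
    (hw : IsUnit (f (Bval A w v))) : Function.Surjective (BHom f A v) := by
  intro s
  obtain ⟨u, hu⟩ := hw.exists_right_inv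
  obtain ⟨t, ht⟩ := hf (u * s)
  refine ⟨fun i => t * w i, ?_⟩
  change f (Bval A _ v) = s
  rw [Bval_smul_left, map_mul, ht]
  linear_combination s * hu

lemma card_vec (N : ℕ) [NeZero N] : Nat.card (Fin 4 → ZMod N) = N ^ 4 := by
  simp [Nat.card_eq_fintype_card, ZMod.card]

lemma unit_of_cast {p k : ℕ} (hp : p.Prime) (hk : k ≠ 0) (a : ZMod (p ^ k))
    (ha : ZMod.castHom (dvd_pow_self p hk) (ZMod p) a ≠ 0) : IsUnit a := by
  have : NeZero (p ^ k) := ⟨pow_ne_zero _ hp.ne_zero⟩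
  have e : a = ((a.val : ℕ) : ZMod (p ^ k)) := by simp
  rw [e, map_natCast] at ha
  rw [e, ZMod.isUnit_iff_coprime]
  rw [Ne, ZMod.natCast_eq_zero_iff] at ha
  exact (Nat.Coprime.pow_left k ((Nat.Prime.coprime_iff_not_dvd hp).2 ha)).symm

/-- Case 1: an isotropic nonradical vector modulo `p`. -/
lemma case_one (A : Matrix (Fin 4) (Fin 4) ℤ) (hA : IsGram A) (p n k : ℕ) (hp : p.Prime)
    (hk : k ≠ 0) (v w : Fin 4 → ℤ) (hv : (p : ℤ) ∣ Qval A v)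
    (hw : ¬ (p : ℤ) ∣ Bval A w v) :
    p ^ (4 * k) * (p - 1) ≤ localCount A p n k * p ^ (k + 1) := by
  classical
  have : Fact p.Prime := ⟨hp⟩
  have : NeZero (p ^ k) := ⟨pow_ne_zero _ hp.ne_zero⟩
  set π := ZMod.castHom (dvd_pow_self p hk) (ZMod p) with hπ
  let v' : Fin 4 → ZMod (p ^ k) := fun i => Int.castRingHom (ZMod (p ^ k)) (v i)
  let w' : Fin 4 → ZMod (p ^ k) := fun i => Int.castRingHom (ZMod (p ^ k)) (w i)
  have hQv : π (Qval A v') = 0 := by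
    have : Qval A v' = Int.castRingHom _ (Qval A v) := (Qval_map _ A v).symm
    rw [this]
    simpa using
      (ZMod.intCast_zmod_eq_zero_iff_dvd (Qval A v) p).2 hv
  have hBw : π (Bval A w' v') ≠ 0 := by
    have : Bval A w' v' = Int.castRingHom _ (Bval A w v) := (Bval_map _ A w v).symm
    rw [this]
    intro h0
    apply hw
    rw [← ZMod.intCast_zmod_eq_zero_iff_dvd]
    simpa using h0
  have hcard := card_preimage (BHom π A v')
    (BHom_surj π (ZMod.castHom_surjective _) A v' w' (isUnit_iff_ne_zero.2 hBw)) (fun y => y ≠ 0)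
  have hc1 : Nat.card {y : ZMod p // y ≠ 0} = p - 1 := by
    rw [Nat.card_eq_fintype_card, Fintype.card_subtype_compl]
    simp [ZMod.card]
  rw [hc1, card_vec, Nat.card_zmod] at hcard
  have hle : Nat.card {x : Fin 4 → ZMod (p ^ k) // (BHom π A v') x ≠ 0} ≤
      localCount A p n k * p ^ k := by
    have hprod : localCount A p n k * p ^ k = Nat.card
        ({x : Fin 4 → ZMod (p ^ k) // Qval A x = (n : ZMod (p ^ k))} × ZMod (p ^ k)) := by
      rw [Nat.card_prod, Nat.card_zmod]; rfl
    rw [hprod]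
    have hex : ∀ x : {x : Fin 4 → ZMod (p ^ k) // (BHom π A v') x ≠ 0},
        ∃ t : ZMod (p ^ k), Qval A (fun i => x.1 i + t * v' i) = (n : ZMod (p ^ k)) := by
      rintro ⟨x, hx⟩
      have hinj : Function.Injective
          (fun t : ZMod (p ^ k) => Qval A (fun i => x i + t * v' i)) := by
        intro t s hts
        simp only [Qval_add A hA] at hts
        have hu : IsUnit (Bval A x v' + (t + s) * Qval A v') := by
          apply unit_of_cast hp hk
          rw [← hπ, map_add, map_mul, hQv, mul_zero, add_zero]
          exact hx
        have : (t - s) * (Bval A x v' + (t + s) * Qval A v') = 0 := by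
          linear_combination hts
        exact sub_eq_zero.1 ((hu.mul_left_eq_zero).1 this)
      exact (Finite.surjective_of_injective hinj) n
    choose t ht using hex
    refine Nat.card_le_card_of_injective (fun x => (⟨_, ht x⟩, t x)) ?_
    intro x y hxy
    simp only [Prod.mk.injEq, Subtype.mk.injEq] at hxy
    obtain ⟨h1, h2⟩ := hxy
    apply Subtype.ext
    funext i
    have := congrFun h1 i
    simp only [h2] at this
    exact add_right_cancel this
  calc p ^ (4 * k) * (p - 1) = (p ^ k) ^ 4 * (p - 1) := by rw [← pow_mul, mul_comm k 4]
    _ = p * _ := hcard.symm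
    _ ≤ p * (localCount A p n k * p ^ k) := Nat.mul_le_mul_left _ hle
    _ = _ := by ring

/-- Case 2: every isotropic vector modulo `p` is radical. -/
lemma case_two (A : Matrix (Fin 4) (Fin 4) ℤ) (hA : IsGram A) (p n : ℕ) (hp : p.Prime)
    (x w : Fin 4 → ZMod p) (hx : Qval A x = (n : ZMod p))
    (hw : Bval A w x ≠ 0)
    (hall : ∀ y : Fin 4 → ZMod p, Qval A y = 0 → Bval A y x = 0) :
    p ^ 3 ≤ Nat.card {x : Fin 4 → ZMod p // Qval A x = (n : ZMod p)} := by
  classical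
  have : Fact p.Prime := ⟨hp⟩
  have hcard := card_preimage (BHom (RingHom.id _) A x)
    (BHom_surj (RingHom.id _) Function.surjective_id A x w (isUnit_iff_ne_zero.2 hw))
    (fun y => y = 1)
  have hc1 : Nat.card {y : ZMod p // y = 1} = 1 := by simp
  rw [hc1, card_vec, Nat.card_zmod, mul_one] at hcard
  have h3 : Nat.card {y : Fin 4 → ZMod p // (BHom (RingHom.id _) A x) y = 1} = p ^ 3 := by
    apply Nat.eq_of_mul_eq_mul_left hp.pos
    rw [hcard]; ring
  rw [← h3]
  have hB : ∀ y : {y : Fin 4 → ZMod p // (BHom (RingHom.id _) A x) y = 1}, Bval A y.1 x = 1 :=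
    fun y => y.2
  have hQ : ∀ y : {y : Fin 4 → ZMod p // (BHom (RingHom.id _) A x) y = 1}, Qval A y.1 ≠ 0 := by
    intro y h0
    have := hall _ h0
    rw [hB] at this
    exact one_ne_zero this
  refine Nat.card_le_card_of_injective
    (fun y => ⟨fun i => x i + (-(Qval A y.1)⁻¹) * y.1 i, ?_⟩) ?_
  · rw [Qval_add A hA, Bval_comm A hA, hB, hx]
    field_simp [hQ y]
    ring
  · intro y z hyz
    simp only [Subtype.mk.injEq] at hyz
    have e := congrArg (fun f => Bval A f x) hyz
    simp only [Bval_add_left, hB] at e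
    have e2 : (Qval A y.1)⁻¹ = (Qval A z.1)⁻¹ := by linear_combination -e
    apply Subtype.ext
    funext i
    have := congrFun hyz i
    simp only [e2] at this
    exact mul_left_cancel₀ (neg_ne_zero.2 (inv_ne_zero (hQ z))) (add_left_cancel this)

/-- The stabilisation step. -/
lemma step (A : Matrix (Fin 4) (Fin 4) ℤ) (p m u k : ℕ) (hp : p.Prime)
    (hodd : p ≠ 2) (hu : ¬ p ∣ u) (hk : m < k) :
    localCount A p (p ^ m * u) (k + 1) = p ^ 3 * localCount A p (p ^ m * u) k := by
  classical
  have : Fact p.Prime := ⟨hp⟩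
  have : NeZero (p ^ k) := ⟨pow_ne_zero _ hp.ne_zero⟩
  have : NeZero (p ^ (k + 1)) := ⟨pow_ne_zero _ hp.ne_zero⟩
  set n := p ^ m * u with hn
  set π := ZMod.castHom (pow_dvd_pow p (Nat.le_succ k)) (ZMod (p ^ k)) with hπ
  have hs : Function.Surjective π := ZMod.castHom_surjective _
  -- every element congruent to `n` modulo `p ^ k` is a unit square times `n`
  have hsq : ∀ r : ZMod (p ^ (k + 1)), π r = n → ∃ s, IsUnit s ∧ r = s ^ 2 * n := by
    intro r hr
    obtain ⟨c, hc⟩ : ∃ c : ZMod (p ^ (k + 1)), r - n = (p : ZMod (p ^ (k + 1))) ^ k * c := by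
      have e : r - n = (((r - n).val : ℕ) : ZMod (p ^ (k + 1))) := by simp
      have h0 : π (r - n) = 0 := by rw [map_sub, hr, map_natCast, sub_self]
      rw [e, map_natCast, ZMod.natCast_eq_zero_iff] at h0
      obtain ⟨c, hc⟩ := h0
      refine ⟨c, ?_⟩
      rw [e, hc]
      push_cast
      rfl
    have h2u : IsUnit (((2 * u : ℕ) : ZMod (p ^ (k + 1)))) := by
      rw [ZMod.isUnit_iff_coprime]
      apply Nat.Coprime.pow_right
      rw [Nat.coprime_comm, Nat.Prime.coprime_iff_not_dvd hp, hp.dvd_mul]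
      rintro (h | h)
      · exact hodd ((Nat.prime_dvd_prime_iff_eq hp Nat.prime_two).1 h)
      · exact hu h
    obtain ⟨b, hb⟩ := h2u.exists_right_inv
    push_cast at hb
    have hpz : (p : ZMod (p ^ (k + 1))) ^ (k + 1) = 0 := by
      have := ZMod.natCast_self (p ^ (k + 1))
      push_cast at this
      exact this
    have hnil : IsNilpotent ((p : ZMod (p ^ (k + 1))) ^ (k - m) * (b * c)) := by
      apply Commute.isNilpotent_mul_right (Commute.all _ _)
      exact IsNilpotent.pow_of_pos ⟨_, hpz⟩ (by omega)
    refine ⟨1 + (p : ZMod (p ^ (k + 1))) ^ (k - m) * (b * c), hnil.isUnit_one_add, ?_⟩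
    obtain ⟨d, rfl⟩ : ∃ d, k = m + 1 + d := ⟨k - (m + 1), by omega⟩
    have e : m + 1 + d - m = d + 1 := by omega
    rw [e, hn] at *
    push_cast at hc ⊢
    linear_combination hc - (p : ZMod (p ^ (m + 1 + d + 1))) ^ (m + 1 + d) * c * hb
      - (p : ZMod (p ^ (m + 1 + d + 1))) ^ d * u * b ^ 2 * c ^ 2 * hpz
  have hfib : ∀ r : ZMod (p ^ (k + 1)), π r = n →
      Nat.card {x : Fin 4 → ZMod (p ^ (k + 1)) // Qval A x = r} = localCount A p n (k + 1) := by
    intro r hr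
    obtain ⟨s, ⟨s, rfl⟩, rfl⟩ := hsq r hr
    symm
    refine Nat.card_congr ⟨fun x => ⟨fun i => s * x.1 i, ?_⟩,
      fun x => ⟨fun i => (s⁻¹ : (ZMod (p ^ (k + 1)))ˣ) * x.1 i, ?_⟩, ?_, ?_⟩
    · rw [Qval_smul, x.2]
    · rw [Qval_smul, x.2, ← mul_assoc, ← mul_pow]; simp
    · intro x; simp
    · intro x; simp
  -- count of `r`
  have hr := card_preimage π.toAddMonoidHom hs (fun y => y = (n : ZMod (p ^ k)))
  have hc1 : Nat.card {y : ZMod (p ^ k) // y = n} = 1 := by simp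
  rw [hc1, Nat.card_zmod, Nat.card_zmod, mul_one] at hr
  have hr' : Nat.card {r : ZMod (p ^ (k + 1)) // π r = n} = p := by
    apply Nat.eq_of_mul_eq_mul_left (pow_pos hp.pos k)
    rw [← pow_succ]; exact hr
  -- count of `x`
  have hx := card_preimage (AddMonoidHom.compLeft π.toAddMonoidHom (Fin 4))
    (hs.comp_left) (fun y => Qval A y = (n : ZMod (p ^ k)))
  rw [card_vec, card_vec] at hx
  have hx' : Nat.card {x : Fin 4 → ZMod (p ^ (k + 1)) // π (Qval A x) = n} =
      p ^ 4 * localCount A p n k := by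
    apply Nat.eq_of_mul_eq_mul_left (pow_pos (pow_pos hp.pos k) 4)
    have e : Nat.card {x : Fin 4 → ZMod (p ^ (k + 1)) // π (Qval A x) = n} =
        Nat.card {x : Fin 4 → ZMod (p ^ (k + 1)) //
          Qval A (AddMonoidHom.compLeft π.toAddMonoidHom (Fin 4) x) = (n : ZMod (p ^ k))} := by
      apply Nat.card_congr
      apply Equiv.subtypeEquivRight
      intro x
      rw [Qval_map]
      rfl
    rw [e, hx]
    change _ * localCount A p n k = _
    rw [Nat.succ_eq_add_one]
    ring
  have hsum : Nat.card {x : Fin 4 → ZMod (p ^ (k + 1)) // π (Qval A x) = n} =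
      p * localCount A p n (k + 1) := by
    have hr2 : p * localCount A p n (k + 1) =
        Nat.card {r : ZMod (p ^ (k + 1)) // π r = n} * localCount A p n (k + 1) := by
      rw [hr']
    rw [hr2, Nat.card_eq_fintype_card, Nat.card_eq_fintype_card, Fintype.card_subtype,
      Fintype.card_subtype, Finset.card_eq_sum_card_fiberwise (f := fun x => Qval A x)
        (t := Finset.univ.filter (fun r => π r = n))]
    · rw [Finset.sum_const_nat]
      intro r hr
      simp only [Finset.mem_filter, Finset.mem_univ, true_and] at hr
      rw [← hfib r hr, Nat.card_eq_fintype_card, Fintype.card_subtype]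
      congr 1
      ext x
      simp only [Finset.mem_filter, Finset.mem_univ, true_and]
      constructor
      · rintro ⟨_, h⟩; exact h
      · intro h; exact ⟨h ▸ hr, h⟩
    · intro x hx
      simpa using hx
  apply Nat.eq_of_mul_eq_mul_left hp.pos
  rw [← hsum, hx']
  ring

lemma mulVec_Bval (A : Matrix (Fin 4) (Fin 4) ℤ) (x : Fin 4 → ℤ)
    (i : Fin 4) : Bval A (Pi.single i 1) x = A.mulVec x i := by
  simp [Bval, Matrix.mulVec, dotProduct, Pi.single_apply]

/-- Lemma 2, part 1 (odd primes): a good-type solution mod `p` forces `β_p(Q;n) ≥ 1 - 1/p`. -/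
theorem local_density_good_type_odd
    (A : Matrix (Fin 4) (Fin 4) ℤ) (p n : ℕ)
    (hA : IsGram A) (hprim : IsPrimitiveQF A) (hpd : PosDefQF A)
    (hp : p.Prime) (hodd : p ≠ 2) (hn : 0 < n)
    (h : ∃ x : Fin 4 → ℤ,
      Qval A x ≡ (n : ℤ) [ZMOD (p : ℤ)] ∧ ¬ ∀ i, (p : ℤ) ∣ A.mulVec x i) :
    DensityBound A p n (1 - 1 / (p : ℝ)) := by
  have : Fact p.Prime := ⟨hp⟩
  have hp0 : (0 : ℝ) < p := by exact_mod_cast hp.pos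
  obtain ⟨m, u, hu, hnu⟩ := Nat.exists_eq_pow_mul_and_not_dvd hn.ne' p hp.ne_one
  obtain ⟨x, hx, hAx⟩ := h
  push Not at hAx
  obtain ⟨i, hi⟩ := hAx
  have hstep : ∀ k, m < k → localCount A p n (k + 1) = p ^ 3 * localCount A p n k := by
    intro k hk
    rw [hnu]
    exact step A p m u k hp hodd hu hk
  have hconst : ∀ j, (localCount A p n (m + 1 + j) : ℝ) / (p : ℝ) ^ (3 * (m + 1 + j)) =
      (localCount A p n (m + 1) : ℝ) / (p : ℝ) ^ (3 * (m + 1)) := by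
    intro j
    induction j with
    | zero => rfl
    | succ j ih =>
      rw [← ih, ← add_assoc, hstep _ (by omega), mul_add 3 (m + 1 + j) 1, pow_add]
      push_cast
      field_simp
  refine ⟨(localCount A p n (m + 1) : ℝ) / (p : ℝ) ^ (3 * (m + 1)), ?_, ?_⟩
  · apply tendsto_const_nhds.congr'
    filter_upwards [Filter.eventually_ge_atTop (m + 1)] with k hk
    obtain ⟨j, rfl⟩ := Nat.exists_eq_add_of_le hk
    exact (hconst j).symm
  · by_cases hiso : ∃ v w : Fin 4 → ℤ, (p : ℤ) ∣ Qval A v ∧ ¬ (p : ℤ) ∣ Bval A w v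
    · obtain ⟨v, w, hv, hw⟩ := hiso
      have h1 := case_one A hA p n (m + 1) hp (by omega) v w hv hw
      have h2 : ((p : ℝ) ^ (4 * (m + 1))) * (p - 1) ≤
          localCount A p n (m + 1) * (p : ℝ) ^ (m + 1 + 1) := by
        have := (Nat.cast_le (α := ℝ)).2 h1
        push_cast [Nat.cast_sub hp.one_le] at this
        exact this
      rw [le_div_iff₀ (by positivity)]
      have h3 : (0 : ℝ) < (p : ℝ) ^ (m + 1 + 1) := by positivity
      refine le_of_mul_le_mul_right (le_trans (le_of_eq ?_) h2) h3
      field_simp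
      ring
    · push Not at hiso
      have hnp : ¬ p ∣ n := by
        intro hpn
        apply hi
        rw [← mulVec_Bval A x i]
        apply hiso
        rw [← Int.modEq_zero_iff_dvd]
        exact hx.trans (Int.modEq_zero_iff_dvd.2 (by exact_mod_cast hpn))
      have hm : m = 0 := by
        by_contra hm
        exact hnp (hnu ▸ Dvd.dvd.mul_right (dvd_pow_self p hm) u)
      subst hm
      let f := Int.castRingHom (ZMod p)
      have hfs : Function.Surjective f := ZMod.intCast_surjective
      have h2 := case_two A hA p n hp (fun i => f (x i))
        (fun j => f ((Pi.single i 1 : Fin 4 → ℤ) j)) ?_ ?_ ?_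
      · have e : localCount A p n (0 + 1) =
            Nat.card {x : Fin 4 → ZMod p // Qval A x = (n : ZMod p)} := by
          unfold localCount
          rw [zero_add, pow_one]
        have h3 : ((p : ℝ) ^ 3) ≤ localCount A p n (0 + 1) := by
          rw [e]; exact_mod_cast h2
        have h4 : (1 : ℝ) ≤ (localCount A p n (0 + 1) : ℝ) / (p : ℝ) ^ (3 * (0 + 1)) := by
          rw [le_div_iff₀ (by positivity)]
          simpa using h3
        have h5 : (0 : ℝ) ≤ 1 / p := by positivity
        linarith
      · rw [← Qval_map]
        simpa using (ZMod.intCast_eq_intCast_iff _ _ _).2 hx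
      · rw [← Bval_map, mulVec_Bval A x]
        intro h0
        exact hi ((ZMod.intCast_zmod_eq_zero_iff_dvd _ _).1 h0)
      · intro y hy
        choose z hz using fun i => hfs (y i)
        have hyz : y = fun i => f (z i) := funext fun i => (hz i).symm
        rw [hyz, ← Qval_map] at hy
        rw [hyz, Bval_comm A hA, ← Bval_map]
        exact (ZMod.intCast_zmod_eq_zero_iff_dvd _ _).2
          (hiso z x ((ZMod.intCast_zmod_eq_zero_iff_dvd _ _).1 hy))
end

section
/- Let Q be a primitive positive-definite quaternary integer-valued quadratic form with Gram matrix A, and let n be a positive integer. If there exists x ∈ ℤ⁴ with Q(x) ≡ n (mod 8) and Ax ≢ 0 (mod 2), then the local density β_2(Q;n) exists and satisfies β_2(Q;n) ≥ 1/4. -/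
open scoped BigOperators

namespace LD

/-- integer lift of a box vector -/
def lift {m : ℕ} (x : Fin 4 → Fin m) : Fin 4 → ℤ := fun i => ((x i).val : ℤ)

/-- number of box points with side `2^k` satisfying `P` -/
noncomputable def cnt (k : ℕ) (P : (Fin 4 → ℤ) → Prop) : ℕ :=
  Nat.card {x : Fin 4 → Fin (2 ^ k) // P (lift x)}

def Per (k : ℕ) (P : (Fin 4 → ℤ) → Prop) : Prop :=
  ∀ x y : Fin 4 → ℤ, (∀ i, x i ≡ y i [ZMOD 2 ^ k]) → (P x ↔ P y)

lemma lift_inj {k : ℕ} (x y : Fin 4 → Fin (2 ^ k))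
    (h : ∀ i, lift x i ≡ lift y i [ZMOD 2 ^ k]) : x = y := by
  funext i
  have h1 := h i
  have h2 : ((x i).val : ℤ) ≡ ((y i).val : ℤ) [ZMOD ((2 ^ k : ℕ) : ℤ)] := by
    push_cast; exact h1
  rw [Int.natCast_modEq_iff] at h2
  have h3 := h2
  unfold Nat.ModEq at h3
  rw [Nat.mod_eq_of_lt (x i).2, Nat.mod_eq_of_lt (y i).2] at h3
  exact Fin.ext h3

lemma exists_lift (k : ℕ) (x : Fin 4 → ℤ) :
    ∃ y : Fin 4 → Fin (2 ^ k), ∀ i, lift y i ≡ x i [ZMOD 2 ^ k] := by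
  have hp : (0 : ℤ) < 2 ^ k := by positivity
  refine ⟨fun i => ⟨(x i % 2 ^ k).toNat, ?_⟩, fun i => ?_⟩
  · have h1 := Int.emod_lt_of_pos (x i) hp
    have h2 := Int.emod_nonneg (x i) hp.ne'
    zify
    rw [Int.toNat_of_nonneg h2]; exact h1
  · have h2 := Int.emod_nonneg (x i) hp.ne'
    simp only [lift]
    rw [Int.toNat_of_nonneg h2]
    exact Int.mod_modEq _ _

lemma cnt_le (k : ℕ) (P P' : (Fin 4 → ℤ) → Prop) (hP' : Per k P')
    (φ : (Fin 4 → ℤ) → (Fin 4 → ℤ)) (h1 : ∀ x, P x → P' (φ x))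
    (h2 : ∀ x y, P x → P y → (∀ i, φ x i ≡ φ y i [ZMOD 2 ^ k]) →
      ∀ i, x i ≡ y i [ZMOD 2 ^ k]) : cnt k P ≤ cnt k P' := by
  choose r hr using exists_lift k
  unfold cnt
  refine Nat.card_le_card_of_injective
    (fun x : {x : Fin 4 → Fin (2 ^ k) // P (lift x)} =>
      (⟨r (φ (lift x.1)), (hP' _ _ (hr _)).2 (h1 _ x.2)⟩ :
        {x : Fin 4 → Fin (2 ^ k) // P' (lift x)})) ?_
  intro x y hxy
  have e : r (φ (lift x.1)) = r (φ (lift y.1)) := congrArg Subtype.val hxy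
  apply Subtype.ext
  apply lift_inj
  apply h2 _ _ x.2 y.2
  intro i
  exact ((hr _ i).symm.trans (by rw [e])).trans (hr _ i)

lemma cnt_succ (k : ℕ) (P : (Fin 4 → ℤ) → Prop) (hP : Per k P) :
    cnt (k + 1) P = 16 * cnt k P := by
  let e0 : Fin 2 × Fin (2 ^ k) ≃ Fin (2 ^ (k + 1)) :=
    finProdFinEquiv.trans (finCongr (by ring))
  have he0 : ∀ p, ((e0 p).val : ℤ) ≡ (p.2.val : ℤ) [ZMOD 2 ^ k] := by
    intro p
    have : (e0 p).val = p.2.val + 2 ^ k * p.1.val := by simp [e0, finProdFinEquiv]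
    rw [this]; push_cast
    exact (Int.modEq_iff_dvd.2 ⟨-(p.1.val : ℤ), by ring⟩)
  let e : (Fin 4 → Fin 2) × (Fin 4 → Fin (2 ^ k)) ≃ (Fin 4 → Fin (2 ^ (k + 1))) :=
    (Equiv.arrowProdEquivProdArrow (Fin 4) (fun _ => Fin 2) (fun _ => Fin (2 ^ k))).symm.trans
      (Equiv.arrowCongr (Equiv.refl _) e0)
  have he : ∀ p, P (lift p.2) ↔ P (lift (e p)) := by
    intro p
    apply hP
    intro i
    exact (he0 (p.1 i, p.2 i)).symm
  unfold cnt
  have e1 : {p : (Fin 4 → Fin 2) × (Fin 4 → Fin (2 ^ k)) // P (lift p.2)} ≃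
      {x : Fin 4 → Fin (2 ^ (k + 1)) // P (lift x)} := e.subtypeEquiv he
  have e2 : (Fin 4 → Fin 2) × {x : Fin 4 → Fin (2 ^ k) // P (lift x)} ≃
      {p : (Fin 4 → Fin 2) × (Fin 4 → Fin (2 ^ k)) // P (lift p.2)} :=
    { toFun := fun p => ⟨(p.1, p.2.1), p.2.2⟩
      invFun := fun p => (p.1.1, ⟨p.1.2, p.2⟩)
      left_inv := fun p => rfl
      right_inv := fun p => rfl }
  rw [← Nat.card_congr e1, ← Nat.card_congr e2, Nat.card_prod]
  congr 1
  simp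

lemma cnt_congr (k : ℕ) (P P' : (Fin 4 → ℤ) → Prop) (h : ∀ x, P x ↔ P' x) :
    cnt k P = cnt k P' := by
  have : P = P' := funext fun x => propext (h x)
  rw [this]

lemma cnt_mono (k : ℕ) (P P' : (Fin 4 → ℤ) → Prop) (h : ∀ x, P x → P' x) :
    cnt k P ≤ cnt k P' := by
  unfold cnt
  exact Nat.card_le_card_of_injective (fun x => ⟨x.1, h _ x.2⟩)
    (fun x y hxy => Subtype.ext (congrArg (fun z => z.1) hxy))

lemma cnt_or (k : ℕ) (P P' : (Fin 4 → ℤ) → Prop) (h : ∀ x, ¬ (P x ∧ P' x)) :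
    cnt k (fun x => P x ∨ P' x) = cnt k P + cnt k P' := by
  classical
  unfold cnt
  simp only [Nat.card_eq_fintype_card]
  apply Fintype.card_subtype_or_disjoint
  rw [Pi.disjoint_iff]
  intro x
  simp only [Prop.disjoint_iff]
  by_contra hc
  exact h (lift x) (by tauto)

/-- bilinear form -/
def B (A : Matrix (Fin 4) (Fin 4) ℤ) (x y : Fin 4 → ℤ) : ℤ := ∑ i, A.mulVec x i * y i

lemma Qval_expand (A : Matrix (Fin 4) (Fin 4) ℤ) (x : Fin 4 → ℤ) :
    Qval A x = (A 0 0 / 2) * x 0 ^ 2 + (A 1 1 / 2) * x 1 ^ 2 + (A 2 2 / 2) * x 2 ^ 2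
      + (A 3 3 / 2) * x 3 ^ 2 + A 0 1 * (x 0 * x 1) + A 0 2 * (x 0 * x 2) + A 0 3 * (x 0 * x 3)
      + A 1 2 * (x 1 * x 2) + A 1 3 * (x 1 * x 3) + A 2 3 * (x 2 * x 3) := by
  have h0 : Finset.Ioi (0 : Fin 4) = {1, 2, 3} := by decide
  have h1 : Finset.Ioi (1 : Fin 4) = {2, 3} := by decide
  have h2 : Finset.Ioi (2 : Fin 4) = {3} := by decide
  have h3 : Finset.Ioi (3 : Fin 4) = ∅ := by decide
  simp [Qval, Fin.sum_univ_four, h0, h1, h2, h3]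
  ring

section
variable {A : Matrix (Fin 4) (Fin 4) ℤ}

lemma B_symm (hA : IsGram A) (x y : Fin 4 → ℤ) : B A x y = B A y x := by
  have hs : ∀ i j, A i j = A j i := fun i j => hA.1.apply j i
  simp only [B, Matrix.mulVec, dotProduct, Fin.sum_univ_four]
  rw [hs 1 0, hs 2 0, hs 3 0, hs 2 1, hs 3 1, hs 3 2]
  ring

lemma B_add_right (x y z : Fin 4 → ℤ) : B A x (y + z) = B A x y + B A x z := by
  simp [B, mul_add, Finset.sum_add_distrib]

lemma B_add_left (x y z : Fin 4 → ℤ) : B A (x + y) z = B A x z + B A y z := by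
  simp [B, Matrix.mulVec_add, add_mul, Finset.sum_add_distrib]

lemma diag (hA : IsGram A) (i : Fin 4) : A i i = 2 * (A i i / 2) := by
  have := hA.2 i
  omega

lemma B_self (hA : IsGram A) (x : Fin 4 → ℤ) : B A x x = 2 * Qval A x := by
  have hs : ∀ i j, A i j = A j i := fun i j => hA.1.apply j i
  rw [Qval_expand]
  simp only [B, Matrix.mulVec, dotProduct, Fin.sum_univ_four]
  rw [hs 1 0, hs 2 0, hs 3 0, hs 2 1, hs 3 1, hs 3 2]
  linear_combination x 0 ^ 2 * diag hA 0 + x 1 ^ 2 * diag hA 1 + x 2 ^ 2 * diag hA 2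
    + x 3 ^ 2 * diag hA 3

lemma Q_add (hA : IsGram A) (x y : Fin 4 → ℤ) :
    Qval A (x + y) = Qval A x + Qval A y + B A x y := by
  have h1 := B_self hA (x + y)
  rw [B_add_left, B_add_right, B_add_right, B_self hA, B_self hA, B_symm hA y x] at h1
  linarith

lemma Q_smul (s : ℤ) (x : Fin 4 → ℤ) : Qval A (s • x) = s ^ 2 * Qval A x := by
  rw [Qval_expand, Qval_expand]
  simp only [Pi.smul_apply, smul_eq_mul]
  ring

lemma Q_per (x y : Fin 4 → ℤ) (m : ℤ) (h : ∀ i, x i ≡ y i [ZMOD m]) :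
    Qval A x ≡ Qval A y [ZMOD m] := by
  rw [Qval_expand, Qval_expand]
  have a := h 0
  have b := h 1
  have c := h 2
  have d := h 3
  gcongr

/-- `A x` modulo `2^(c+1)` -/
def w (A : Matrix (Fin 4) (Fin 4) ℤ) (c : ℕ) (x : Fin 4 → ℤ) : Fin 4 → ZMod (2 ^ (c + 1)) :=
  fun i => ((A.mulVec x i : ℤ) : ZMod (2 ^ (c + 1)))

lemma w_per (c : ℕ) (x y : Fin 4 → ℤ) (h : ∀ i, x i ≡ y i [ZMOD 2 ^ (c + 1)]) :
    w A c x = w A c y := by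
  funext i
  simp only [w]
  have := (ZMod.intCast_eq_intCast_iff (A.mulVec x i) (A.mulVec y i) (2 ^ (c + 1))).2
  apply this
  push_cast
  simp only [Matrix.mulVec, dotProduct, Fin.sum_univ_four]
  have a := h 0
  have b := h 1
  have c := h 2
  have d := h 3
  gcongr

/-- the solutions modulo `2^k` with `A x` nonzero modulo `2^(c+1)` -/
def Sol (A : Matrix (Fin 4) (Fin 4) ℤ) (c k : ℕ) (a : ℤ) (x : Fin 4 → ℤ) : Prop :=
  Qval A x ≡ a [ZMOD 2 ^ k] ∧ w A c x ≠ 0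

lemma Sol_per (c k : ℕ) (a : ℤ) (h : c + 1 ≤ k) : Per k (Sol A c k a) := by
  intro x y hxy
  have h1 := Q_per (A := A) x y _ hxy
  have h2 : w A c x = w A c y := w_per c x y
    (fun i => (hxy i).of_dvd (pow_dvd_pow 2 h))
  unfold Sol
  rw [h2]
  exact and_congr_left fun _ => ⟨fun h => h1.symm.trans h, fun h => h1.trans h⟩

lemma val_exists (c : ℕ) (z : ℤ) (hz : (z : ZMod (2 ^ (c + 1))) ≠ 0) :
    ∃ m ≤ c, ∃ u : ℤ, z = 2 ^ m * (2 * u + 1) := by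
  have h0 : ¬ (2 : ℤ) ^ (c + 1) ∣ z := by
    intro h
    apply hz
    rw [ZMod.intCast_zmod_eq_zero_iff_dvd]
    exact_mod_cast h
  clear hz
  induction c generalizing z with
  | zero =>
    refine ⟨0, le_rfl, z / 2, ?_⟩
    simp at h0 ⊢
    omega
  | succ c ih =>
    by_cases h2 : (2 : ℤ) ∣ z
    · obtain ⟨y, rfl⟩ := h2
      obtain ⟨m, hm, u, rfl⟩ := ih y (fun h => h0 (by
        rw [pow_succ']; exact mul_dvd_mul_left 2 h))
      exact ⟨m + 1, by omega, u, by ring⟩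
    · exact ⟨0, by omega, z / 2, by simp; omega⟩

lemma shift_exists (c k : ℕ) (hk : 2 * c + 1 ≤ k) (v : Fin 4 → ZMod (2 ^ (c + 1))) (hv : v ≠ 0) :
    ∃ (i : Fin 4) (s : ℤ), 2 ^ (c + 1) ∣ s ∧ 2 ^ (k + 1) ∣ s ^ 2 ∧
      ∀ z : ℤ, (z : ZMod (2 ^ (c + 1))) = v i → s * z ≡ 2 ^ k [ZMOD 2 ^ (k + 1)] := by
  obtain ⟨i, hi⟩ := Function.ne_iff.1 hv
  obtain ⟨z0, hz0⟩ := ZMod.intCast_surjective (v i)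
  obtain ⟨m, hm, u, hu⟩ := val_exists c z0 (by rw [hz0]; exact hi)
  refine ⟨i, 2 ^ (k - m), pow_dvd_pow 2 (by omega), ?_, ?_⟩
  · rw [← pow_mul]; exact pow_dvd_pow 2 (by omega)
  · intro z hz
    rw [← hz0, ZMod.intCast_eq_intCast_iff_dvd_sub] at hz
    push_cast at hz
    obtain ⟨t, ht⟩ := hz
    have hz' : z = 2 ^ m * (2 * u + 1) - 2 ^ (c + 1) * t := by linarith
    obtain ⟨d, rfl⟩ : ∃ d, c = m + d := ⟨c - m, by omega⟩
    obtain ⟨l, rfl⟩ : ∃ l, k = m + l := ⟨k - m, by omega⟩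
    rw [hz', Nat.add_sub_cancel_left]
    apply Int.ModEq.symm
    rw [Int.modEq_iff_dvd]
    exact ⟨u - 2 ^ d * t, by ring⟩

lemma Sol_half_le (hA : IsGram A) (c k : ℕ) (hk : 2 * c + 1 ≤ k) (a : ℤ) :
    cnt (k + 1) (Sol A c (k + 1) a) ≤ cnt (k + 1) (Sol A c (k + 1) (a + 2 ^ k)) := by
  classical
  have := shift_exists c k hk
  choose! I S h1 h2 h3 using this
  let t : (Fin 4 → ℤ) → (Fin 4 → ℤ) := fun x => S (w A c x) • Pi.single (I (w A c x)) 1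
  have hw : ∀ x, w A c x ≠ 0 → w A c (x + t x) = w A c x := by
    intro x hx
    apply w_per
    intro i
    apply Int.ModEq.symm
    rw [Int.modEq_iff_dvd]
    simp only [t, Pi.add_apply, Pi.smul_apply, smul_eq_mul, add_sub_cancel_left]
    exact Dvd.dvd.mul_right (h1 _ hx) _
  apply cnt_le _ _ _ (Sol_per c (k + 1) _ (by omega)) (fun x => x + t x)
  · rintro x ⟨hq, hx⟩
    refine ⟨?_, by rw [hw x hx]; exact hx⟩
    rw [Q_add hA]
    have e1 : Qval A (t x) ≡ 0 [ZMOD 2 ^ (k + 1)] := by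
      simp only [t]
      rw [Q_smul, Int.modEq_zero_iff_dvd]
      exact Dvd.dvd.mul_right (h2 _ hx) _
    have e2 : B A x (t x) = S (w A c x) * A.mulVec x (I (w A c x)) := by
      simp [B, t, Pi.single_apply]
      ring
    have e3 := h3 _ hx (A.mulVec x (I (w A c x))) rfl
    rw [← e2] at e3
    simpa using (hq.add e1).add e3
  · rintro x y ⟨_, hx⟩ ⟨_, hy⟩ hxy i
    have e : w A c x = w A c y := by
      rw [← hw x hx, ← hw y hy]
      exact w_per c _ _ (fun i => (hxy i).of_dvd (pow_dvd_pow 2 (by omega)))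
    have e2 : t x = t y := by simp only [t, e]
    have := hxy i
    simp only [e2, Pi.add_apply] at this
    exact Int.ModEq.add_right_cancel' _ this

lemma Sol_step (hA : IsGram A) (c k : ℕ) (hk : 2 * c + 1 ≤ k) (a : ℤ) :
    cnt (k + 1) (Sol A c (k + 1) a) = 8 * cnt k (Sol A c k a) := by
  have e1 := Sol_half_le hA c k hk a
  have e2 := Sol_half_le hA c k hk (a + 2 ^ k)
  have e3 : cnt (k + 1) (Sol A c (k + 1) (a + 2 ^ k + 2 ^ k))
      = cnt (k + 1) (Sol A c (k + 1) a) := by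
    apply cnt_congr
    intro x
    have : a + 2 ^ k + 2 ^ k ≡ a [ZMOD 2 ^ (k + 1)] := by
      rw [Int.modEq_iff_dvd]; exact ⟨-1, by ring⟩
    exact and_congr_left fun _ => ⟨fun h => h.trans this, fun h => h.trans this.symm⟩
  have e4 := cnt_succ k (Sol A c k a) (Sol_per c k a (by omega))
  have e5 : cnt (k + 1) (Sol A c k a) =
      cnt (k + 1) (fun x => Sol A c (k + 1) a x ∨ Sol A c (k + 1) (a + 2 ^ k) x) := by
    apply cnt_congr
    intro x
    constructor
    · rintro ⟨h, hx⟩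
      obtain ⟨u, hu⟩ := Int.modEq_iff_dvd.1 h
      obtain ⟨v, hv⟩ | ⟨v, hv⟩ := Int.even_or_odd u
      · left
        exact ⟨Int.modEq_iff_dvd.2 ⟨v, by rw [hu, hv]; ring⟩, hx⟩
      · right
        exact ⟨Int.modEq_iff_dvd.2 ⟨v + 1, by
          rw [hv] at hu; linear_combination hu⟩, hx⟩
    · rintro (⟨h, hx⟩ | ⟨h, hx⟩)
      · exact ⟨h.of_dvd (pow_dvd_pow 2 (by omega)), hx⟩
      · refine ⟨(h.of_dvd (pow_dvd_pow 2 (by omega))).trans ?_, hx⟩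
        simp
  rw [cnt_or] at e5
  · omega
  · rintro x ⟨⟨h, _⟩, ⟨h', _⟩⟩
    have := h.symm.trans h'
    rw [Int.modEq_iff_dvd] at this
    obtain ⟨u, hu⟩ := this
    have hp : (2 : ℤ) ^ k ≠ 0 := by positivity
    have : (2 : ℤ) ^ k * (2 * u - 1) = 0 := by linear_combination -hu
    rcases mul_eq_zero.1 this with h | h
    · exact hp h
    · omega

lemma Sol_all (hA : IsGram A) (c k : ℕ) (hk : 2 * c + 1 ≤ k) (a : ℤ) (j : ℕ) :
    cnt (k + j) (Sol A c (k + j) a) = 8 ^ j * cnt k (Sol A c k a) := by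
  induction j with
  | zero => simp
  | succ j ih =>
    rw [← add_assoc, Sol_step hA c (k + j) (by omega), ih]
    ring

lemma localCount_eq (n k : ℕ) :
    localCount A 2 n k = cnt k (fun x => Qval A x ≡ (n : ℤ) [ZMOD 2 ^ k]) := by
  unfold localCount cnt
  let e0 : Fin (2 ^ k) ≃ ZMod (2 ^ k) :=
    { toFun := fun z => ((z.val : ℕ) : ZMod (2 ^ k))
      invFun := fun z => ⟨z.val, ZMod.val_lt z⟩
      left_inv := fun z => Fin.ext (ZMod.val_cast_of_lt z.2)
      right_inv := fun z => ZMod.natCast_zmod_val z }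
  have he0 : ∀ z : Fin (2 ^ k), e0 z = ((z.val : ℤ) : ZMod (2 ^ k)) := by
    intro z
    simp [e0]
  symm
  apply Nat.card_congr
  refine (Equiv.arrowCongr (Equiv.refl (Fin 4)) e0).subtypeEquiv ?_
  intro x
  have : Qval A ((Equiv.arrowCongr (Equiv.refl (Fin 4)) e0) x)
      = ((Qval A (lift x) : ℤ) : ZMod (2 ^ k)) := by
    simp [Qval, lift, he0]
  rw [this]
  have h2 := ZMod.intCast_eq_intCast_iff (Qval A (lift x)) (n : ℤ) (2 ^ k)
  push_cast at h2
  exact h2.symm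

lemma exists_perp : ∀ a b : Fin 4 → ZMod 2, ∃ z : Fin 4 → ZMod 2,
    z ≠ 0 ∧ ∑ i, a i * z i = 0 ∧ ∑ i, b i * z i = 0 := by
  intro a b
  let f : (Fin 4 → ZMod 2) →ₗ[ZMod 2] (Fin 2 → ZMod 2) :=
    Matrix.mulVecLin (Matrix.of ![a, b])
  obtain ⟨z, hz, hz0⟩ := (Submodule.ne_bot_iff _).1
    (LinearMap.ker_ne_bot_of_finrank_lt (f := f) (by simp))
  have hz' : f z = 0 := hz
  refine ⟨z, hz0, ?_, ?_⟩
  · simpa [f, Matrix.mulVec, dotProduct] using congrFun hz' 0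
  · simpa [f, Matrix.mulVec, dotProduct] using congrFun hz' 1

lemma B_per (hA : IsGram A) (x y z : Fin 4 → ℤ) (h : ∀ i, x i ≡ y i [ZMOD 2]) :
    B A z x ≡ B A z y [ZMOD 2] := by
  simp only [B, Fin.sum_univ_four]
  have a := h 0
  have b := h 1
  have c := h 2
  have d := h 3
  gcongr

lemma good_of (x y : Fin 4 → ℤ) (h : B A x y % 2 = 1) : w A 0 x ≠ 0 := by
  intro h0
  have : ∀ i, (2 : ℤ) ∣ A.mulVec x i := by
    intro i
    have := congrFun h0 i
    simp only [w, Pi.zero_apply, ZMod.intCast_zmod_eq_zero_iff_dvd] at this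
    simpa using this
  have : (2 : ℤ) ∣ B A x y := Finset.dvd_sum fun i _ => Dvd.dvd.mul_right (this i) _
  omega

lemma second (hA : IsGram A) (x : Fin 4 → ℤ) (hx : ¬ ∀ i, (2 : ℤ) ∣ A.mulVec x i) :
    w A 0 x ≠ 0 ∧ ∃ y : Fin 4 → ℤ, Qval A y ≡ Qval A x [ZMOD 2] ∧ w A 0 y ≠ 0 ∧
      ¬ ∀ i, y i ≡ x i [ZMOD 2] := by
  push Not at hx
  obtain ⟨i, hi⟩ := hx
  obtain ⟨y, hy⟩ : ∃ y, B A x y % 2 = 1 := by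
    refine ⟨Pi.single i 1, ?_⟩
    simp [B, Pi.single_apply]
    omega
  have hyx : B A y x % 2 = 1 := by rw [B_symm hA]; exact hy
  have hxx := B_self hA x
  have hyy := B_self hA y
  refine ⟨good_of x y hy, ?_⟩
  obtain hqy | hqy := Int.emod_two_eq_zero_or_one (Qval A y)
  · obtain hqx | hqx := Int.emod_two_eq_zero_or_one (Qval A x)
    · refine ⟨y, by unfold Int.ModEq; omega, good_of y x hyx, fun h => ?_⟩
      have := B_per hA _ _ x h
      unfold Int.ModEq at this
      omega
    · obtain ⟨z', hz0, hz1, hz2⟩ := exists_perp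
        (fun i => ((A.mulVec x i : ℤ) : ZMod 2)) (fun i => ((A.mulVec y i : ℤ) : ZMod 2))
      choose z hz using fun i => ZMod.intCast_surjective (z' i)
      simp only [← hz] at hz1 hz2
      have hxz : B A x z % 2 = 0 := by
        have : ((B A x z : ℤ) : ZMod 2) = 0 := by rw [← hz1]; simp [B]
        rw [ZMod.intCast_zmod_eq_zero_iff_dvd] at this
        push_cast at this; omega
      have hyz : B A y z % 2 = 0 := by
        have : ((B A y z : ℤ) : ZMod 2) = 0 := by rw [← hz2]; simp [B]
        rw [ZMod.intCast_zmod_eq_zero_iff_dvd] at this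
        push_cast at this; omega
      obtain hqz | hqz := Int.emod_two_eq_zero_or_one (Qval A z)
      · refine ⟨x + z, ?_, good_of _ y ?_, fun h => hz0 ?_⟩
        · rw [Q_add hA]; unfold Int.ModEq; omega
        · rw [B_add_left, B_symm hA z y]; omega
        · funext i
          have h1 := h i
          rw [← hz i]
          simp only [Pi.add_apply, Int.ModEq, Pi.zero_apply] at h1 ⊢
          rw [ZMod.intCast_zmod_eq_zero_iff_dvd]
          push_cast
          omega
      · refine ⟨y + z, ?_, good_of _ x ?_, fun h => ?_⟩
        · rw [Q_add hA]; unfold Int.ModEq; omega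
        · rw [B_add_left, B_symm hA z x]; omega
        · have := B_per hA _ _ x h
          rw [B_add_right] at this
          unfold Int.ModEq at this
          omega
  · refine ⟨x + y, ?_, good_of _ y ?_, fun h => ?_⟩
    · rw [Q_add hA]; unfold Int.ModEq; omega
    · rw [B_add_left]; omega
    · have := B_per hA _ _ x h
      rw [B_add_right] at this
      unfold Int.ModEq at this
      omega

lemma two_le (hA : IsGram A) (n : ℕ) (x : Fin 4 → ℤ) (hq : Qval A x ≡ (n : ℤ) [ZMOD 8])
    (hx : ¬ ∀ i, (2 : ℤ) ∣ A.mulVec x i) : 2 ≤ cnt 1 (Sol A 0 1 n) := by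
  obtain ⟨hx', y, hyq, hyw, hne⟩ := second hA x hx
  have hq2 : Qval A x ≡ (n : ℤ) [ZMOD 2] := hq.of_dvd (by norm_num)
  have sx : Sol A 0 1 n x := ⟨by simpa using hq2, hx'⟩
  have sy : Sol A 0 1 n y := ⟨by simpa using hyq.trans hq2, hyw⟩
  obtain ⟨x', hx1⟩ := exists_lift 1 x
  obtain ⟨y', hy1⟩ := exists_lift 1 y
  have hp := Sol_per (A := A) 0 1 n le_rfl
  have : Nontrivial {x : Fin 4 → Fin (2 ^ 1) // Sol A 0 1 n (lift x)} := by
    refine ⟨⟨⟨x', (hp _ _ hx1).2 sx⟩, ⟨y', (hp _ _ hy1).2 sy⟩, fun h => hne ?_⟩⟩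
    have e : x' = y' := congrArg Subtype.val h
    subst e
    intro i
    simpa using (hy1 i).symm.trans (hx1 i)
  unfold cnt
  exact Finite.one_lt_card

lemma all_good (hA : IsGram A) (n k : ℕ) (hn : 0 < n) (hk : 2 * n + 1 ≤ k) (x : Fin 4 → ℤ) :
    Qval A x ≡ (n : ℤ) [ZMOD 2 ^ k] ↔ Sol A (2 * n) k n x := by
  refine ⟨fun h => ⟨h, fun h0 => ?_⟩, fun h => h.1⟩
  have h1 : ∀ i, (2 : ℤ) ^ (2 * n + 1) ∣ A.mulVec x i := by
    intro i
    have := congrFun h0 i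
    simp only [w, Pi.zero_apply, ZMod.intCast_zmod_eq_zero_iff_dvd] at this
    exact_mod_cast this
  have h2 : (2 : ℤ) ^ (2 * n + 1) ∣ B A x x :=
    Finset.dvd_sum fun i _ => Dvd.dvd.mul_right (h1 i) _
  rw [B_self hA] at h2
  have h3 : (2 : ℤ) ^ (2 * n + 1) ∣ n - Qval A x :=
    (pow_dvd_pow 2 hk).trans (Int.modEq_iff_dvd.1 h)
  have h4 : (2 : ℤ) ^ (2 * n + 1) ∣ ((2 * n : ℕ) : ℤ) := by
    have := (Dvd.dvd.mul_left h3 2).add h2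
    have e : ((2 * n : ℕ) : ℤ) = 2 * (n - Qval A x) + 2 * Qval A x := by push_cast; ring
    rw [e]
    exact this
  have h5 : 2 ^ (2 * n + 1) ∣ 2 * n := by exact_mod_cast h4
  have h6 := Nat.le_of_dvd (by omega) h5
  have h7 : 2 * n + 1 < 2 ^ (2 * n + 1) := Nat.lt_two_pow_self
  omega

end

end LD

/-- Lemma 2, part 1 (p = 2): a good-type solution mod 8 forces `β_2(Q;n) ≥ 1/4`. -/
theorem local_density_good_type_two
    (A : Matrix (Fin 4) (Fin 4) ℤ) (n : ℕ)
    (hA : IsGram A) (hprim : IsPrimitiveQF A) (hpd : PosDefQF A) (hn : 0 < n)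
    (h : ∃ x : Fin 4 → ℤ,
      Qval A x ≡ (n : ℤ) [ZMOD 8] ∧ ¬ ∀ i, (2 : ℤ) ∣ A.mulVec x i) :
    DensityBound A 2 n (1 / 4 : ℝ) := by
  obtain ⟨x, hq, hx⟩ := h
  have hL : ∀ j, localCount A 2 n (4 * n + 1 + j) = 8 ^ j * localCount A 2 n (4 * n + 1) := by
    intro j
    rw [LD.localCount_eq, LD.localCount_eq,
      LD.cnt_congr _ _ _ (LD.all_good hA n (4 * n + 1 + j) hn (by omega)),
      LD.cnt_congr _ _ _ (LD.all_good hA n (4 * n + 1) hn (by omega))]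
    exact LD.Sol_all hA (2 * n) (4 * n + 1) (by omega) n j
  have hG : 2 * 8 ^ (4 * n) ≤ localCount A 2 n (4 * n + 1) := by
    have h1 := LD.Sol_all hA 0 1 (by omega) n (4 * n)
    have h2 := LD.two_le hA n x hq hx
    rw [LD.localCount_eq, add_comm (4 * n) 1]
    calc 2 * 8 ^ (4 * n) ≤ 8 ^ (4 * n) * LD.cnt 1 (LD.Sol A 0 1 n) := by
          rw [mul_comm]; exact Nat.mul_le_mul_left _ h2
      _ = _ := h1.symm
      _ ≤ _ := LD.cnt_mono _ _ _ (fun x hx => hx.1)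
  refine ⟨(localCount A 2 n (4 * n + 1) : ℝ) / 8 ^ (4 * n + 1), ?_, ?_⟩
  · apply tendsto_const_nhds.congr'
    filter_upwards [Filter.eventually_ge_atTop (4 * n + 1)] with k hk
    obtain ⟨j, rfl⟩ := Nat.exists_eq_add_of_le hk
    rw [hL j, pow_mul]
    push_cast
    norm_num
    rw [pow_add (8 : ℝ) (4 * n + 1) j]
    field_simp
  · rw [le_div_iff₀ (by positivity)]
    have : (2 * 8 ^ (4 * n) : ℝ) ≤ localCount A 2 n (4 * n + 1) := by exact_mod_cast hG
    rw [pow_succ]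
    linarith
end

section
/- Let Q be a primitive positive-definite quaternary integer-valued quadratic form with discriminant D(Q), let p be an odd prime, and let n be a positive integer. If there exists x ∈ ℤ_p⁴ with Q(x) = n and x ∉ p·ℤ_p⁴ (i.e. n is primitively represented by Q over ℤ_p), then the local density β_p(Q;n) exists and satisfies β_p(Q;n) ≥ p^(−⌊ord_p(D(Q))/2⌋) · (1 − 1/p), where ord_p denotes the p-adic valuation. -/
open scoped BigOperators

section part1
/-- Fibres of a surjective additive homomorphism. -/
theorem card_fib {G H : Type*} [AddCommGroup G] [AddCommGroup H] [Finite G] [Finite H]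
    (f : G →+ H) (hf : Function.Surjective f) (P : H → Prop) :
    Nat.card {x : G // P (f x)} = Nat.card {y : H // P y} * Nat.card f.ker := by
  rw [← Nat.card_prod]
  choose s hs using hf
  refine Nat.card_congr
    { toFun := fun x => (⟨f x.1, x.2⟩, ⟨x.1 - s (f x.1), by simp [AddMonoidHom.mem_ker, hs]⟩)
      invFun := fun z => ⟨s z.1.1 + z.2.1, by
        have := z.2.2
        rw [AddMonoidHom.mem_ker] at this
        rw [map_add, this, hs, add_zero]; exact z.1.2⟩
      left_inv := fun x => by simp
      right_inv := fun z => by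
        have := z.2.2
        rw [AddMonoidHom.mem_ker] at this
        ext <;> simp [hs, this] }

theorem card_fib' {G H : Type*} [AddCommGroup G] [AddCommGroup H] [Finite G] [Finite H]
    (f : G →+ H) (hf : Function.Surjective f) (P : H → Prop) :
    Nat.card H * Nat.card {x : G // P (f x)} = Nat.card G * Nat.card {y : H // P y} := by
  have h1 := card_fib f hf P
  have h2 := card_fib f hf (fun _ => True)
  have e1 : Nat.card {x : G // True} = Nat.card G := Nat.card_congr (Equiv.subtypeUnivEquiv (by simp))
  have e2 : Nat.card {x : H // True} = Nat.card H := Nat.card_congr (Equiv.subtypeUnivEquiv (by simp))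
  rw [e1, e2] at h2
  rw [h1, h2]; ring

section field
variable {F : Type*} [Field F] [Fintype F] [DecidableEq F]

open Finset

/-- number of solutions of `a x² + b y² = m`, as an integer -/
def binC (a b m : F) : ℤ := ∑ x : F, ∑ y : F, if a * x ^ 2 + b * y ^ 2 = m then 1 else 0

theorem sqC (h2 : ringChar F ≠ 2) (d : F) :
    (∑ x : F, if x ^ 2 = d then (1 : ℤ) else 0) = quadraticChar F d + 1 := by
  rw [← quadraticChar_card_sqrts h2 d, Finset.sum_boole]
  congr 2
  ext x; simp

theorem binC_zero (h2 : ringChar F ≠ 2) {a b : F} (ha : a ≠ 0) (hb : b ≠ 0) :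
    binC a b 0 = Fintype.card F + quadraticChar F (-(b / a)) * (Fintype.card F - 1) := by
  unfold binC
  rw [Finset.sum_comm]
  have : ∀ y : F, (∑ x : F, if a * x ^ 2 + b * y ^ 2 = 0 then (1 : ℤ) else 0)
      = if y = 0 then 1 else quadraticChar F (-(b/a)) + 1 := by
    intro y
    have e : (∑ x : F, if a * x ^ 2 + b * y ^ 2 = 0 then (1 : ℤ) else 0)
       = ∑ x : F, if x ^ 2 = -(b/a) * y ^ 2 then (1 : ℤ) else 0 := by
      refine Finset.sum_congr rfl fun x _ => ?_
      congr 1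
      apply propext
      field_simp
      constructor
      · intro h; linear_combination h
      · intro h; linear_combination h
    rw [e, sqC h2]
    split_ifs with h
    · simp [h]
    · rw [map_mul, quadraticChar_sq_one' h]; ring
  rw [Finset.sum_congr rfl (fun y _ => this y), Finset.sum_ite]
  simp only [Finset.sum_const, nsmul_eq_mul]
  have c1 : (univ.filter (fun y : F => y = 0)).card = 1 := by simp [Finset.filter_eq']
  have c2 : ((univ.filter (fun y : F => ¬ y = 0)).card : ℤ) = Fintype.card F - 1 := by
    have := Finset.card_filter_add_card_filter_not (s := (univ : Finset F)) (fun y : F => y = 0)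
    rw [c1, Finset.card_univ] at this
    omega
  rw [c1, c2]; push_cast; ring

theorem binC_card (a b m : F) :
    binC a b m = ((univ : Finset (F × F)).filter (fun z => a * z.1 ^ 2 + b * z.2 ^ 2 = m)).card := by
  unfold binC
  rw [← Finset.univ_product_univ, ← Finset.sum_product', Finset.sum_boole]

theorem binC_le (h2 : ringChar F ≠ 2) {a b : F} (ha : a ≠ 0) (hb : b ≠ 0) {m m' : F} (hm : m ≠ 0)
    (hm' : m' ≠ 0) : binC a b m ≤ binC a b m' := by
  obtain ⟨s, t, hst⟩ : ∃ s t : F, s ^ 2 + (b / a) * t ^ 2 = m' / m := by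
    have hF : Fintype.card F % 2 = 1 := FiniteField.odd_card_of_char_ne_two h2
    open Polynomial in
    obtain ⟨s, t, h⟩ := FiniteField.exists_root_sum_quadratic (R := F)
      (f := X ^ 2) (g := C (b / a) * X ^ 2 - C (m' / m))
      (by rw [degree_X_pow]; rfl) (by
        have : b / a ≠ 0 := div_ne_zero hb ha
        compute_degree!) hF
    refine ⟨s, t, ?_⟩
    simp at h
    linear_combination h
  rw [binC_card, binC_card]
  norm_cast
  refine Finset.card_le_card_of_injOn
    (fun z => (s * z.1 - (b/a) * t * z.2, s * z.2 + t * z.1)) ?_ ?_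
  · intro z hz
    simp only [coe_filter, mem_univ, true_and, Set.mem_ofPred_eq] at hz ⊢
    have hb' : b = (b / a) * a := by field_simp
    set d := b / a
    have hst' : (s ^ 2 + d * t ^ 2) * m = m' := by rw [hst]; field_simp
    rw [hb'] at hz ⊢
    rw [← hst', ← hz]; ring
  · intro z _ w _ h
    simp only [Prod.mk.injEq] at h
    obtain ⟨h1, h3⟩ := h
    have hN : s ^ 2 + (b / a) * t ^ 2 ≠ 0 := by rw [hst]; exact div_ne_zero hm' hm
    ext
    · refine mul_left_cancel₀ hN ?_
      linear_combination s * h1 + (b/a) * t * h3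
    · refine mul_left_cancel₀ hN ?_
      linear_combination s * h3 - t * h1

theorem binC_sum (a b : F) : ∑ m : F, binC a b m = (Fintype.card F : ℤ) ^ 2 := by
  unfold binC
  rw [Finset.sum_comm]
  rw [Finset.sum_congr rfl (fun x _ => Finset.sum_comm)]
  simp [sq]

theorem binC_eq (h2 : ringChar F ≠ 2) {a b : F} (ha : a ≠ 0) (hb : b ≠ 0) :
    ∃ ε : ℤ, (ε = 1 ∨ ε = -1) ∧ ∀ m : F, binC a b m =
      Fintype.card F - ε + (if m = 0 then Fintype.card F * ε else 0) := by
  refine ⟨quadraticChar F (-(b/a)), quadraticChar_dichotomy (by simp [ha, hb]), fun m => ?_⟩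
  split_ifs with hm
  · rw [hm, binC_zero h2 ha hb]; ring
  · have hs := binC_sum a b
    rw [← Finset.add_sum_erase _ _ (mem_univ (0 : F))] at hs
    have : ∀ m' ∈ (univ : Finset F).erase 0, binC a b m' = binC a b m := by
      intro m' h'
      have h' : m' ≠ 0 := by simpa using h'
      exact le_antisymm (binC_le h2 ha hb h' hm) (binC_le h2 ha hb hm h')
    rw [Finset.sum_congr rfl this, binC_zero h2 ha hb, Finset.sum_const, Finset.card_erase_of_mem (mem_univ _),
      Finset.card_univ, nsmul_eq_mul] at hs
    have h1 : 1 < Fintype.card F := Fintype.one_lt_card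
    push_cast [Nat.cast_sub h1.le] at hs
    have h0 : ((Fintype.card F : ℤ) - 1) ≠ 0 := by omega
    refine mul_left_cancel₀ h0 ?_
    linear_combination hs

end field
end part1

section part2
open Finset
variable {F : Type*} [Field F] [Fintype F] [DecidableEq F]

theorem card_four (P : (Fin 4 → F) → Prop) [DecidablePred P] :
    (Nat.card {y : Fin 4 → F // P y} : ℤ)
      = ∑ x : F, ∑ y : F, ∑ z : F, ∑ w : F, if P ![x, y, z, w] then 1 else 0 := by
  rw [Nat.card_eq_fintype_card, Fintype.card_subtype, Finset.card_filter]
  push_cast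
  rw [← (Fin.consEquiv (fun _ : Fin 4 => F)).sum_comp, Fintype.sum_prod_type]
  refine Finset.sum_congr rfl fun x _ => ?_
  rw [← (Fin.consEquiv (fun _ : Fin 3 => F)).sum_comp, Fintype.sum_prod_type]
  refine Finset.sum_congr rfl fun y _ => ?_
  rw [← (Fin.consEquiv (fun _ : Fin 2 => F)).sum_comp, Fintype.sum_prod_type]
  refine Finset.sum_congr rfl fun z _ => ?_
  rw [← (Fin.consEquiv (fun _ : Fin 1 => F)).sum_comp, Fintype.sum_prod_type]
  refine Finset.sum_congr rfl fun w _ => ?_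
  rw [Fintype.sum_unique]
  rfl

theorem sqC_le (h2 : ringChar F ≠ 2) {a : F} (ha : a ≠ 0) (n : F) :
    (∑ x : F, if a * x ^ 2 = n then (1 : ℤ) else 0) ≤ 2 := by
  have : (∑ x : F, if a * x ^ 2 = n then (1 : ℤ) else 0)
     = ∑ x : F, if x ^ 2 = n / a then (1 : ℤ) else 0 := by
    refine Finset.sum_congr rfl fun x _ => ?_
    congr 1
    apply propext
    rw [eq_div_iff ha, mul_comm]
  rw [this, sqC h2]
  by_cases h : n / a = 0
  · simp [h]
  · rcases quadraticChar_dichotomy h with h | h <;> rw [h] <;> norm_num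

theorem sq0C {a : F} (ha : a ≠ 0) :
    (∑ x : F, if a * x ^ 2 = 0 then (1 : ℤ) else 0) = 1 := by
  simp [ha]

theorem binC_a0 (a n : F) :
    binC a 0 n = Fintype.card F * (∑ x : F, if a * x ^ 2 = n then (1 : ℤ) else 0) := by
  unfold binC
  rw [Finset.mul_sum]
  refine Finset.sum_congr rfl fun x _ => ?_
  simp

theorem binC_0b (a n : F) :
    binC 0 a n = Fintype.card F * (∑ x : F, if a * x ^ 2 = n then (1 : ℤ) else 0) := by
  unfold binC
  simp

theorem binC_00 (n : F) :
    binC 0 0 n = if n = 0 then (Fintype.card F : ℤ) ^ 2 else 0 := by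
  unfold binC
  by_cases h : n = 0
  · simp [h, sq]
  · simp [h, Ne.symm h]

theorem quad_total (h2 : ringChar F ≠ 2) {a b : F} (ha : a ≠ 0) (hb : b ≠ 0) (c d n : F) :
    ∃ ε : ℤ, (ε = 1 ∨ ε = -1) ∧
    (∑ x : F, ∑ y : F, ∑ z : F, ∑ w : F,
      if a * x ^ 2 + b * y ^ 2 + c * z ^ 2 + d * w ^ 2 = n then (1 : ℤ) else 0)
      = (Fintype.card F : ℤ) ^ 2 * (Fintype.card F - ε) + Fintype.card F * ε * binC c d n := by
  obtain ⟨ε, hε, hbin⟩ := binC_eq h2 ha hb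
  refine ⟨ε, hε, ?_⟩
  have e1 : (∑ x : F, ∑ y : F, ∑ z : F, ∑ w : F,
      if a * x ^ 2 + b * y ^ 2 + c * z ^ 2 + d * w ^ 2 = n then (1 : ℤ) else 0)
      = ∑ z : F, ∑ w : F, binC a b (n - (c * z ^ 2 + d * w ^ 2)) := by
    unfold binC
    calc _ = ∑ x : F, ∑ z : F, ∑ w : F, ∑ y : F,
      (if a * x ^ 2 + b * y ^ 2 + c * z ^ 2 + d * w ^ 2 = n then (1 : ℤ) else 0) := by
          refine Finset.sum_congr rfl fun x _ => ?_
          rw [Finset.sum_comm]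
          refine Finset.sum_congr rfl fun z _ => ?_
          rw [Finset.sum_comm]
      _ = ∑ z : F, ∑ w : F, ∑ x : F, ∑ y : F,
      (if a * x ^ 2 + b * y ^ 2 + c * z ^ 2 + d * w ^ 2 = n then (1 : ℤ) else 0) := by
          rw [Finset.sum_comm]
          refine Finset.sum_congr rfl fun z _ => ?_
          rw [Finset.sum_comm]
      _ = _ := by
          refine Finset.sum_congr rfl fun z _ => Finset.sum_congr rfl fun w _ =>
            Finset.sum_congr rfl fun x _ => Finset.sum_congr rfl fun y _ => ?_
          congr 1
          apply propext
          rw [eq_sub_iff_add_eq, add_assoc, add_assoc, ← add_assoc]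
  rw [e1]
  simp_rw [hbin, Finset.sum_add_distrib]
  have e2 : (∑ z : F, ∑ w : F, if n - (c * z ^ 2 + d * w ^ 2) = 0 then (Fintype.card F : ℤ) * ε else 0)
     = Fintype.card F * ε * binC c d n := by
    unfold binC
    rw [Finset.mul_sum]
    refine Finset.sum_congr rfl fun z _ => ?_
    rw [Finset.mul_sum]
    refine Finset.sum_congr rfl fun w _ => ?_
    rw [mul_ite, mul_one, mul_zero]
    congr 1
    apply propext
    rw [sub_eq_zero, eq_comm]
  rw [e2]
  simp
  ring

theorem sing_total {a b : F} (ha : a ≠ 0) (hb : b ≠ 0) (c d n : F) :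
    (∑ x : F, ∑ y : F, ∑ z : F, ∑ w : F,
      if (a * x ^ 2 + b * y ^ 2 + c * z ^ 2 + d * w ^ 2 = n ∧
        (a * x = 0 ∧ b * y = 0 ∧ c * z = 0 ∧ d * w = 0)) then (1 : ℤ) else 0)
      = if n = 0 then (if c = 0 then (Fintype.card F : ℤ) else 1) * (if d = 0 then (Fintype.card F : ℤ) else 1)
        else 0 := by
  have key : ∀ x y z w : F, (if (a * x ^ 2 + b * y ^ 2 + c * z ^ 2 + d * w ^ 2 = n ∧
        (a * x = 0 ∧ b * y = 0 ∧ c * z = 0 ∧ d * w = 0)) then (1 : ℤ) else 0)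
     = (if x = 0 then (if y = 0 then (if n = 0 then (if c * z = 0 then 1 else 0) * (if d * w = 0 then 1 else 0) else 0) else 0) else 0) := by
    intro x y z w
    have : (a * x ^ 2 + b * y ^ 2 + c * z ^ 2 + d * w ^ 2 = n ∧
        (a * x = 0 ∧ b * y = 0 ∧ c * z = 0 ∧ d * w = 0)) ↔ (x = 0 ∧ y = 0 ∧ n = 0 ∧ c * z = 0 ∧ d * w = 0) := by
      constructor
      · rintro ⟨h, h1, h2, h3, h4⟩
        refine ⟨by simpa [ha] using h1, by simpa [hb] using h2, ?_, h3, h4⟩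
        rw [← h]; linear_combination x * h1 + y * h2 + z * h3 + w * h4
      · rintro ⟨h1, h2, h, h3, h4⟩
        refine ⟨?_, by simp [h1], by simp [h2], h3, h4⟩
        rw [h, h1, h2]; linear_combination z * h3 + w * h4
    rw [if_congr this rfl rfl]
    split_ifs <;> simp_all
  simp_rw [key]
  have s : ∀ c : F, (∑ z : F, if c * z = 0 then (1 : ℤ) else 0) = if c = 0 then (Fintype.card F : ℤ) else 1 := by
    intro c
    by_cases hc : c = 0
    · simp [hc]
    · simp [hc]
  by_cases hn : n = 0
  · have : ∀ x y : F, (∑ z : F, ∑ w : F, (if x = 0 then (if y = 0 then (if n = 0 then (if c * z = 0 then 1 else 0) * (if d * w = 0 then (1:ℤ) else 0) else 0) else 0) else 0)) = if x = 0 then (if y = 0 then ((if c = 0 then (Fintype.card F : ℤ) else 1) * (if d = 0 then (Fintype.card F : ℤ) else 1)) else 0) else 0 := by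
      intro x y
      rw [← s c, ← s d, Finset.sum_mul_sum]
      simp only [hn, if_true]
      split_ifs <;> simp
    simp_rw [this]
    simp [hn]
  · simp [hn]

/-- main count over a finite field, when the first two coefficients are nonzero -/
theorem quad_count01 (h2 : ringChar F ≠ 2) (a : Fin 4 → F) (ha : a 0 ≠ 0) (hb : a 1 ≠ 0) (n : F)
    (h : ∃ y : Fin 4 → F, ∑ i, a i * y i ^ 2 = n ∧ ∃ i, a i * y i ≠ 0) :
    (Fintype.card F) ^ 3 ≤
      Nat.card {y : Fin 4 → F // ∑ i, a i * y i ^ 2 = n ∧ ∃ i, a i * y i ≠ 0}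
      + (Fintype.card F) ^ 2 := by
  have hpos : 0 < Nat.card {y : Fin 4 → F // ∑ i, a i * y i ^ 2 = n ∧ ∃ i, a i * y i ≠ 0} := by
    obtain ⟨y, hy⟩ := h
    have : Nonempty {y : Fin 4 → F // ∑ i, a i * y i ^ 2 = n ∧ ∃ i, a i * y i ≠ 0} := ⟨⟨y, hy⟩⟩
    exact Nat.card_pos
  have hc := card_four (fun y : Fin 4 → F => ∑ i, a i * y i ^ 2 = n ∧ ∃ i, a i * y i ≠ 0)
  set M := Nat.card {y : Fin 4 → F // ∑ i, a i * y i ^ 2 = n ∧ ∃ i, a i * y i ≠ 0}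
  obtain ⟨ε, hε, ht⟩ := quad_total h2 ha hb (a 2) (a 3) n
  have hs := sing_total ha hb (a 2) (a 3) n
  have hM : (M : ℤ) = (Fintype.card F : ℤ) ^ 2 * (Fintype.card F - ε) + Fintype.card F * ε * binC (a 2) (a 3) n
     - (if n = 0 then (if a 2 = 0 then (Fintype.card F : ℤ) else 1) * (if a 3 = 0 then (Fintype.card F : ℤ) else 1)
        else 0) := by
    rw [← ht, ← hs, hc]
    simp_rw [← Finset.sum_sub_distrib]
    refine Finset.sum_congr rfl fun x _ => Finset.sum_congr rfl fun y _ =>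
            Finset.sum_congr rfl fun z _ => Finset.sum_congr rfl fun w _ => ?_
    have e1 : (∑ i, a i * ![x, y, z, w] i ^ 2 = n ∧ ∃ i, a i * ![x, y, z, w] i ≠ 0) ↔
       (a 0 * x ^ 2 + a 1 * y ^ 2 + a 2 * z ^ 2 + a 3 * w ^ 2 = n ∧
         ¬ (a 0 * x = 0 ∧ a 1 * y = 0 ∧ a 2 * z = 0 ∧ a 3 * w = 0)) := by
      rw [Fin.sum_univ_four, ← not_forall_not]
      simp only [not_not, Fin.forall_fin_succ]
      simp
    rw [if_congr e1 rfl rfl]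
    by_cases p1 : a 0 * x ^ 2 + a 1 * y ^ 2 + a 2 * z ^ 2 + a 3 * w ^ 2 = n <;>
    by_cases p2 : (a 0 * x = 0 ∧ a 1 * y = 0 ∧ a 2 * z = 0 ∧ a 3 * w = 0) <;>
    simp only [p1, p2, if_true, if_false, true_and, not_true, not_false_iff, false_and] <;> norm_num
  zify at hpos ⊢
  have hq : (2 : ℤ) ≤ Fintype.card F := by exact_mod_cast Fintype.one_lt_card
  set q : ℤ := (Fintype.card F : ℤ) with hqd
  have hJ0 : 0 ≤ binC (a 2) (a 3) n := by
    unfold binC; positivity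
  by_cases hn : n = 0
  · simp only [hn, if_true] at hM
    by_cases h3 : a 2 = 0 <;> by_cases h4 : a 3 = 0
    · simp only [h3, h4, if_true, binC_00, ← hqd] at hM
      rcases hε with rfl | rfl
      · nlinarith [sq_nonneg q]
      · exfalso; nlinarith
    · simp only [h3, h4, if_true, if_false, binC_0b, ← hqd, sq0C h4] at hM
      rcases hε with rfl | rfl <;> nlinarith [sq_nonneg q]
    · simp only [h3, h4, if_true, if_false, binC_a0, ← hqd, sq0C h3] at hM
      rcases hε with rfl | rfl <;> nlinarith [sq_nonneg q]
    · obtain ⟨ε', hε', hb'⟩ := binC_eq h2 h3 h4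
      simp only [h3, h4, if_true, if_false, hb', ← hqd] at hM
      rcases hε with rfl | rfl <;> rcases hε' with rfl | rfl <;> nlinarith [sq_nonneg q]
  · simp only [hn, if_false] at hM
    rcases hε with rfl | rfl
    · nlinarith
    · have : binC (a 2) (a 3) n ≤ 2 * q := by
        by_cases h3 : a 2 = 0 <;> by_cases h4 : a 3 = 0
        · simp only [h3, h4, binC_00, hn, if_false]; omega
        · simp only [h3, binC_0b, ← hqd]; nlinarith [sqC_le h2 h4 n]
        · simp only [h4, binC_a0, ← hqd]; nlinarith [sqC_le h2 h3 n]
        · obtain ⟨ε', hε', hb'⟩ := binC_eq h2 h3 h4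
          rw [hb', if_neg hn]; rcases hε' with rfl | rfl <;> omega
      nlinarith

theorem quad_count (h2 : ringChar F ≠ 2) (a : Fin 4 → F) (n : F)
    (h : ∃ y : Fin 4 → F, ∑ i, a i * y i ^ 2 = n ∧ ∃ i, a i * y i ≠ 0) :
    (Fintype.card F) ^ 3 ≤
      Nat.card {y : Fin 4 → F // ∑ i, a i * y i ^ 2 = n ∧ ∃ i, a i * y i ≠ 0}
      + (Fintype.card F) ^ 2 := by
  obtain ⟨y, hy, i, hi⟩ := h
  by_cases hj : ∃ j, i ≠ j ∧ a j ≠ 0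
  · obtain ⟨j, hij, hj⟩ := hj
    have : ∀ i j : Fin 4, i ≠ j → ∃ σ : Equiv.Perm (Fin 4), σ 0 = i ∧ σ 1 = j := by decide
    obtain ⟨σ, h0, h1⟩ := this i j hij
    have e : Nat.card {y : Fin 4 → F // ∑ i, a i * y i ^ 2 = n ∧ ∃ i, a i * y i ≠ 0}
       = Nat.card {y : Fin 4 → F // ∑ i, a (σ i) * y i ^ 2 = n ∧ ∃ i, a (σ i) * y i ≠ 0} := by
      refine Nat.card_congr ((Equiv.arrowCongr σ (Equiv.refl F)).symm.subtypeEquiv fun y => ?_)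
      refine and_congr ?_ ?_
      · rw [← Equiv.sum_comp σ (fun i => a i * y i ^ 2)]; rfl
      · rw [← σ.exists_congr_right (q := fun i => a i * y i ≠ 0)]; rfl
    rw [e]
    refine quad_count01 h2 (fun i => a (σ i)) ?_ ?_ n ⟨fun i => y (σ i), ?_, σ.symm i, ?_⟩
    · simp only [h0]; exact left_ne_zero_of_mul hi
    · simp only [h1]; exact hj
    · rw [← hy]; exact Equiv.sum_comp σ (fun i => a i * y i ^ 2)
    · simpa using hi
  · push Not at hj
    have hsum : ∀ z : Fin 4 → F, ∑ j, a j * z j ^ 2 = a i * z i ^ 2 := fun z => by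
      refine Finset.sum_eq_single i (fun j _ hji => ?_) (by simp)
      rw [hj j (Ne.symm hji), zero_mul]
    have : Nat.card (Fin 3 → F) ≤ Nat.card {y : Fin 4 → F // ∑ i, a i * y i ^ 2 = n ∧ ∃ i, a i * y i ≠ 0} := by
      refine Nat.card_le_card_of_injective
        (fun z => ⟨i.insertNth (y i) z, ?_, i, ?_⟩) ?_
      · rw [hsum, Fin.insertNth_apply_same, ← hsum, hy]
      · simpa using hi
      · intro z w hzw
        simp only [Subtype.mk.injEq] at hzw
        exact Fin.insertNth_right_injective (α := fun _ => F) (p := i) _ hzw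
    rw [Nat.card_eq_fintype_card] at this
    simp only [Fintype.card_fun, Fintype.card_fin] at this
    omega
end part2

section part3
open Finset

section padic
variable {p : ℕ} [hp : Fact p.Prime]

instance neZeroPow (k : ℕ) : NeZero (p ^ k) := ⟨pow_ne_zero _ hp.out.ne_zero⟩

/-- reduction map -/
def redm (p : ℕ) {k m : ℕ} (h : k ≤ m) : ZMod (p ^ m) →+* ZMod (p ^ k) :=
  ZMod.castHom (pow_dvd_pow p h) (ZMod (p ^ k))

theorem redm_surj {k m : ℕ} (h : k ≤ m) : Function.Surjective (redm p h) :=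
  ZMod.castHom_surjective _

theorem redm_toZModPow {k m : ℕ} (h : k ≤ m) (x : ℤ_[p]) :
    redm p h (PadicInt.toZModPow m x) = PadicInt.toZModPow k x := by
  rw [← PadicInt.zmod_cast_comp_toZModPow k m h]; rfl

theorem exists_nat {m : ℕ} (x : ZMod (p ^ m)) : ∃ v : ℕ, (v : ZMod (p ^ m)) = x :=
  ⟨x.val, by rw [ZMod.natCast_val, ZMod.cast_id]⟩

theorem redm_eq_zero {k j m : ℕ} (h : k ≤ m) (hm : k + j = m) (x : ZMod (p ^ m)) :
    redm p h x = 0 ↔ (p : ZMod (p ^ m)) ^ j * x = 0 := by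
  obtain ⟨v, rfl⟩ := exists_nat x
  rw [map_natCast, ZMod.natCast_eq_zero_iff, ← Nat.cast_pow, ← Nat.cast_mul, ZMod.natCast_eq_zero_iff,
    ← hm, pow_add, mul_comm]
  exact (Nat.mul_dvd_mul_iff_left (pow_pos hp.out.pos _)).symm

theorem redm_eq_zero_dvd {k m : ℕ} (h : k ≤ m) (x : ZMod (p ^ m)) (hx : redm p h x = 0) :
    ∃ c, x = (p : ZMod (p ^ m)) ^ k * c := by
  obtain ⟨v, rfl⟩ := exists_nat x
  rw [map_natCast, ZMod.natCast_eq_zero_iff] at hx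
  obtain ⟨c, rfl⟩ := hx
  exact ⟨c, by push_cast; rfl⟩

theorem isUnit_natCast {m : ℕ} (hm : m ≠ 0) (v : ℕ) : IsUnit (v : ZMod (p ^ m)) ↔ ¬ p ∣ v := by
  rw [ZMod.isUnit_iff_coprime, Nat.coprime_pow_right_iff (Nat.pos_of_ne_zero hm), Nat.coprime_comm,
    hp.out.coprime_iff_not_dvd]

theorem not_isUnit_iff_dvd {m : ℕ} (hm : m ≠ 0) (x : ZMod (p ^ m)) :
    ¬ IsUnit x ↔ (p : ZMod (p ^ m)) ∣ x := by
  constructor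
  · obtain ⟨v, rfl⟩ := exists_nat x
    rw [isUnit_natCast hm, not_not]
    exact fun h => Nat.cast_dvd_cast h
  · intro h hx
    have := isUnit_of_dvd_unit h hx
    rw [isUnit_natCast hm] at this
    exact this dvd_rfl

theorem isUnit_redm {k m : ℕ} (h : k ≤ m) (hk : k ≠ 0) (x : ZMod (p ^ m)) :
    IsUnit (redm p h x) ↔ IsUnit x := by
  obtain ⟨v, rfl⟩ := exists_nat x
  rw [map_natCast, isUnit_natCast hk, isUnit_natCast (by omega)]

theorem card_Z (k : ℕ) : Nat.card (ZMod (p ^ k)) = p ^ k := Nat.card_zmod _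

theorem card_V (k : ℕ) : Nat.card (Fin 4 → ZMod (p ^ k)) = p ^ (4 * k) := by
  rw [Nat.card_fun, card_Z, Nat.card_eq_fintype_card, Fintype.card_fin, ← pow_mul, mul_comm]

theorem card_ann {k j m : ℕ} (hm : k + j = m) :
    Nat.card {x : ZMod (p ^ m) // (p : ZMod (p ^ m)) ^ j * x = 0} = p ^ j := by
  have h : k ≤ m := by omega
  have := card_fib' (redm p h).toAddMonoidHom (redm_surj h) (fun y => y = 0)
  have h1 : Nat.card {y : ZMod (p ^ k) // y = 0} = 1 := Nat.card_unique
  rw [card_Z, card_Z, h1, mul_one] at this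
  subst hm
  refine Nat.eq_of_mul_eq_mul_left (pow_pos hp.out.pos k) (Eq.trans ?_ (this.trans (pow_add p k j)))
  congr 1
  exact Nat.card_congr (Equiv.subtypeEquivRight fun x => (redm_eq_zero h rfl x).symm)

/-- coordinatewise reduction -/
def redV (p : ℕ) {k m : ℕ} (h : k ≤ m) : (Fin 4 → ZMod (p ^ m)) →+ (Fin 4 → ZMod (p ^ k)) :=
  (redm p h).toAddMonoidHom.compLeft (Fin 4)

theorem redV_surj {k m : ℕ} (h : k ≤ m) : Function.Surjective (redV p h) := by
  intro y
  choose x hx using fun i => redm_surj h (y i)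
  exact ⟨x, funext hx⟩

theorem card_redV (k : ℕ) (P : (Fin 4 → ZMod (p ^ k)) → Prop) :
    Nat.card {x : Fin 4 → ZMod (p ^ (k+1)) // P (redV p (Nat.le_succ k) x)} = p ^ 4 * Nat.card {y // P y} := by
  have := card_fib' (redV p (Nat.le_succ k)) (redV_surj _) P
  rw [card_V, card_V, show 4 * (k+1) = 4 * k + 4 by ring, pow_add, mul_assoc] at this
  exact Nat.eq_of_mul_eq_mul_left (pow_pos hp.out.pos _) this

/-- diagonal form mod `p^k` -/
noncomputable def dg (k : ℕ) (a : Fin 4 → ℤ_[p]) (y : Fin 4 → ZMod (p ^ k)) : ZMod (p ^ k) :=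
  ∑ i, PadicInt.toZModPow k (a i) * y i ^ 2

/-- number of solutions -/
noncomputable def NN (a : Fin 4 → ℤ_[p]) (n k : ℕ) : ℕ :=
  Nat.card {y : Fin 4 → ZMod (p ^ k) // dg k a y = n}

/-- number of nonsingular solutions -/
noncomputable def MM (a : Fin 4 → ℤ_[p]) (n k : ℕ) : ℕ :=
  Nat.card {y : Fin 4 → ZMod (p ^ k) // dg k a y = n ∧ ∃ i, IsUnit (PadicInt.toZModPow k (a i) * y i)}

/-- number of singular solutions -/
noncomputable def ZZ (a : Fin 4 → ℤ_[p]) (n k : ℕ) : ℕ :=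
  Nat.card {y : Fin 4 → ZMod (p ^ k) // dg k a y = n ∧ ∀ i, ¬ IsUnit (PadicInt.toZModPow k (a i) * y i)}

theorem NN_eq (a : Fin 4 → ℤ_[p]) (n k : ℕ) : NN a n k = MM a n k + ZZ a n k := by
  classical
  unfold NN MM ZZ
  simp only [Nat.card_eq_fintype_card, Fintype.card_subtype]
  rw [← Finset.card_filter_add_card_filter_not (s := univ.filter fun y : Fin 4 → ZMod (p ^ k) => dg k a y = n)
    (fun y => ∃ i, IsUnit (PadicInt.toZModPow k (a i) * y i)), Finset.filter_filter, Finset.filter_filter]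
  simp only [not_exists]

theorem dg_red {k m : ℕ} (h : k ≤ m) (a : Fin 4 → ℤ_[p]) (y : Fin 4 → ZMod (p ^ m)) :
    redm p h (dg m a y) = dg k a (redV p h y) := by
  unfold dg
  rw [map_sum]
  refine Finset.sum_congr rfl fun i _ => ?_
  rw [map_mul, map_pow, redm_toZModPow]
  rfl

/-- Hensel step for nonsingular solutions -/
theorem MM_succ (h2 : p ≠ 2) (a : Fin 4 → ℤ_[p]) (n k : ℕ) (hk : k ≠ 0) :
    MM a n (k+1) = p ^ 3 * MM a n k := by
  classical
  have hX := card_redV (p := p) k (fun y => dg k a y = n ∧ ∃ i, IsUnit (PadicInt.toZModPow k (a i) * y i))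
  change _ = p ^ 4 * MM a n k at hX
  let R := ZMod (p ^ (k+1))
  let G := Fin 4 → R
  let α : Fin 4 → R := fun i => PadicInt.toZModPow (k+1) (a i)
  let X : Finset G := univ.filter fun x => redm p (Nat.le_succ k) (dg (k+1) a x) = n ∧ ∃ i, IsUnit (α i * x i)
  have hXc : X.card = p ^ 4 * MM a n k := by
    rw [← hX, Nat.card_eq_fintype_card, Fintype.card_subtype]
    congr 1
    refine Finset.filter_congr fun x _ => ?_
    rw [dg_red]
    refine and_congr Iff.rfl (exists_congr fun i => ?_)
    rw [← isUnit_redm (Nat.le_succ k) hk (α i * x i), map_mul, redm_toZModPow]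
    rfl
  have hYc : (X.filter fun x => dg (k+1) a x = n).card = MM a n (k+1) := by
    unfold MM
    rw [Nat.card_eq_fintype_card, Fintype.card_subtype, Finset.filter_filter]
    congr 1
    refine Finset.filter_congr fun x _ => ?_
    constructor
    · rintro ⟨⟨_, h⟩, h'⟩; exact ⟨h', h⟩
    · rintro ⟨h, h'⟩; exact ⟨⟨by rw [h, map_natCast], h'⟩, h⟩
  let q : R := (p : R) ^ k
  have hqred : redm p (Nat.le_succ k) q = 0 := by
    rw [map_pow, map_natCast, ← Nat.cast_pow, ZMod.natCast_self]
  have hqq : q * q = 0 := by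
    rw [← pow_add, ← Nat.cast_pow, ZMod.natCast_eq_zero_iff]
    exact pow_dvd_pow p (by omega)
  have hshift : ∀ (x t : G), dg (k+1) a (fun i => x i + q * t i) = dg (k+1) a x + q * ∑ i, (2 * (α i * x i)) * t i := by
    intro x t
    unfold dg
    rw [Finset.mul_sum, ← Finset.sum_add_distrib]
    refine Finset.sum_congr rfl fun i _ => ?_
    change α i * _ = α i * _ + _
    linear_combination α i * t i ^ 2 * hqq
  have hmem : ∀ (x t : G), (fun i => x i + q * t i) ∈ X ↔ x ∈ X := by
    intro x t
    simp only [X, mem_filter, mem_univ, true_and]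
    refine and_congr ?_ (exists_congr fun i => ?_)
    · rw [hshift, map_add, map_mul, hqred, zero_mul, add_zero]
    · rw [← isUnit_redm (Nat.le_succ k) hk, ← isUnit_redm (Nat.le_succ k) hk (α i * x i), mul_add, map_add,
        map_mul _ (α i) (q * t i), map_mul _ q, hqred, zero_mul, mul_zero, add_zero]
  have c1 : (∑ t : G, ∑ x ∈ X, if dg (k+1) a (fun i => x i + q * t i) = n then 1 else 0)
      = Nat.card G * MM a n (k+1) := by
    rw [Nat.card_eq_fintype_card, ← hYc, ← Finset.card_univ, ← smul_eq_mul, ← Finset.sum_const]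
    refine Finset.sum_congr rfl fun t _ => ?_
    rw [Finset.card_filter]
    refine Finset.sum_bijective (fun x : G => (fun i => x i + q * t i)) ?_ (fun x => (hmem x t).symm) (fun x _ => rfl)
    constructor
    · intro x y h
      funext i
      exact add_right_cancel (congrFun h i)
    · intro y
      exact ⟨fun i => y i - q * t i, funext fun i => by simp⟩
  have hcount : ∀ x ∈ X, p * (∑ t : G, if dg (k+1) a (fun i => x i + q * t i) = n then 1 else 0) = Nat.card G := by
    intro x hx
    simp only [X, mem_filter, mem_univ, true_and] at hx
    obtain ⟨hx1, i, hi⟩ := hx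
    obtain ⟨c, hc⟩ := redm_eq_zero_dvd (Nat.le_succ k) (dg (k+1) a x - (n : ZMod (p ^ (k+1)))) (by rw [map_sub, hx1, map_natCast, sub_self])
    let ℓ : G →+ R :=
      { toFun := fun t => ∑ i, (2 * (α i * x i)) * t i
        map_zero' := Finset.sum_eq_zero fun i _ => by rw [Pi.zero_apply, mul_zero]
        map_add' := fun s t => by
          rw [← Finset.sum_add_distrib]
          exact Finset.sum_congr rfl fun i _ => by rw [Pi.add_apply]; ring }
    have hℓ : Function.Surjective ℓ := by
      intro r
      have hu : IsUnit (2 * (α i * x i)) := by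
        refine IsUnit.mul ?_ hi
        have := (isUnit_natCast (p := p) (m := k+1) (by omega) 2).2
          (fun h => h2 ((Nat.prime_dvd_prime_iff_eq hp.out Nat.prime_two).1 h))
        simpa using this
      obtain ⟨w, hw⟩ := hu
      refine ⟨Pi.single i (↑w⁻¹ * r), ?_⟩
      change ∑ j, (2 * (α j * x j)) * (Pi.single i (↑w⁻¹ * r) : G) j = r
      rw [Finset.sum_eq_single i]
      · rw [← hw, Pi.single_eq_same, Units.mul_inv_cancel_left]
      · intro j _ hj
        rw [Pi.single_eq_of_ne hj, mul_zero]
      · simp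
    have h1 := card_fib' ℓ hℓ (fun r => q * (c + r) = 0)
    have h3 : Nat.card {r : R // q * (c + r) = 0} = p ^ k := by
      rw [← card_ann (p := p) (k := 1) (j := k) (m := k+1) (by omega)]
      exact Nat.card_congr ((Equiv.addLeft c).subtypeEquiv fun r => Iff.rfl)
    have h4 : Nat.card {t : G // q * (c + ℓ t) = 0} = ∑ t : G, if dg (k+1) a (fun i => x i + q * t i) = n then 1 else 0 := by
      rw [Nat.card_eq_fintype_card, Fintype.card_subtype, Finset.card_filter]
      refine Finset.sum_congr rfl fun t _ => ?_
      congr 1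
      apply propext
      rw [hshift, ← sub_eq_zero (a := _ + _), add_sub_right_comm, hc, ← mul_add]
      rfl
    rw [h3, h4, card_Z] at h1
    generalize (∑ t : G, if dg (k+1) a (fun i => x i + q * t i) = n then 1 else 0) = S at h1 ⊢
    rw [pow_succ, mul_assoc, mul_comm (Nat.card G)] at h1
    exact Nat.eq_of_mul_eq_mul_left (pow_pos hp.out.pos _) h1
  rw [Finset.sum_comm] at c1
  have c2 : p * (Nat.card G * MM a n (k+1)) = X.card * Nat.card G := by
    rw [← c1, Finset.mul_sum, Finset.sum_congr rfl hcount, Finset.sum_const, smul_eq_mul]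
  have hG : 0 < Nat.card G := Nat.card_pos
  rw [hXc] at c2
  have c3 : (p * Nat.card G) * MM a n (k+1) = (p * Nat.card G) * (p ^ 3 * MM a n k) := by
    rw [mul_assoc, c2]; ring
  exact Nat.eq_of_mul_eq_mul_left (Nat.mul_pos hp.out.pos hG) c3

theorem MM_eq (h2 : p ≠ 2) (a : Fin 4 → ℤ_[p]) (n k : ℕ) :
    MM a n (k+1) = p ^ (3 * k) * MM a n 1 := by
  induction k with
  | zero => simp
  | succ k ih => rw [MM_succ h2 _ _ _ (Nat.succ_ne_zero k), ih]; ring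

end padic
end part3

section part4
open Finset

section padic
variable {p : ℕ} [hp : Fact p.Prime]

/-- coefficients `p^e u` -/
noncomputable def co (u : Fin 4 → ℤ_[p]) (e : Fin 4 → ℕ) : Fin 4 → ℤ_[p] := fun i => (p : ℤ_[p]) ^ e i * u i

/-- new exponents -/
def nx (e : Fin 4 → ℕ) : Fin 4 → ℕ := fun i => if e i = 0 then 1 else e i - 1

/-- number of unit coefficients -/
def nS (e : Fin 4 → ℕ) : ℕ := (univ.filter fun i => e i = 0).card

theorem co_unit {u : Fin 4 → ℤ_[p]} (hu : ∀ i, IsUnit (u i)) (e : Fin 4 → ℕ) {k : ℕ} (hk : k ≠ 0) (i : Fin 4)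
    (y : ZMod (p ^ k)) :
    ¬ IsUnit (PadicInt.toZModPow k (co u e i) * y) ↔ (e i = 0 → (p : ZMod (p ^ k)) ∣ y) := by
  unfold co
  rw [map_mul, map_pow, map_natCast]
  have hu' : IsUnit (PadicInt.toZModPow k (u i)) := (hu i).map _
  by_cases h : e i = 0
  · simp only [h, pow_zero, one_mul, true_imp_iff]
    rw [← not_isUnit_iff_dvd hk, not_iff_not, IsUnit.mul_iff]
    exact ⟨fun h => h.2, fun h => ⟨hu', h⟩⟩
  · simp only [h, false_imp_iff, iff_true]
    rw [not_isUnit_iff_dvd hk, mul_assoc]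
    exact Dvd.dvd.mul_right (dvd_pow_self _ h) _

theorem ZZ_zero {u : Fin 4 → ℤ_[p]} (hu : ∀ i, IsUnit (u i)) (e : Fin 4 → ℕ) (n k : ℕ) (hn : ¬ p ∣ n) :
    ZZ (co u e) n (k+1) = 0 := by
  unfold ZZ
  rw [Nat.card_eq_zero]
  left
  constructor
  rintro ⟨y, hy, hs⟩
  rw [← isUnit_natCast (p := p) (Nat.succ_ne_zero k), ← hy] at hn
  refine (not_isUnit_iff_dvd (Nat.succ_ne_zero k) _).2 ?_ hn
  unfold dg
  refine Finset.dvd_sum fun i _ => ?_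
  have := (not_isUnit_iff_dvd (Nat.succ_ne_zero k) _).1 (hs i)
  rw [sq, ← mul_assoc]
  exact Dvd.dvd.mul_right this _

/-- scaling map -/
def scl (p : ℕ) (e : Fin 4 → ℕ) (k : ℕ) : (Fin 4 → ZMod (p ^ k)) →+ (Fin 4 → ZMod (p ^ k)) where
  toFun y := fun i => (if e i = 0 then (p : ZMod (p ^ k)) else 1) * y i
  map_zero' := by funext i; simp
  map_add' x y := by funext i; simp [mul_add]

theorem scl_ker (e : Fin 4 → ℕ) (k : ℕ) : Nat.card (scl p e (k+1)).ker = p ^ nS e := by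
  have e1 : Nat.card (scl p e (k+1)).ker =
      Nat.card {y : Fin 4 → ZMod (p ^ (k+1)) // ∀ i, (if e i = 0 then (p : ZMod (p ^ (k+1))) else 1) * y i = 0} := by
    refine Nat.card_congr (Equiv.subtypeEquivRight fun y => ?_)
    rw [AddMonoidHom.mem_ker, funext_iff]
    rfl
  rw [e1, Nat.card_congr (Equiv.subtypePiEquivPi
    (p := fun i (b : ZMod (p ^ (k+1))) => (if e i = 0 then (p : ZMod (p ^ (k+1))) else 1) * b = 0)), Nat.card_pi]
  unfold nS
  rw [Finset.card_filter, ← Finset.prod_pow_eq_pow_sum]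
  refine Finset.prod_congr rfl fun i _ => ?_
  by_cases h : e i = 0
  · simp only [h, if_true, pow_one]
    have := card_ann (p := p) (k := k) (j := 1) (m := k+1) rfl
    simpa using this
  · simp only [h, if_false, pow_zero, one_mul]
    exact Nat.card_unique

theorem ZZ_succ {u : Fin 4 → ℤ_[p]} (hu : ∀ i, IsUnit (u i)) (e : Fin 4 → ℕ) (n k : ℕ) :
    ZZ (co u e) (p * n) (k+1) * p ^ nS e = p ^ 4 * NN (co u (nx e)) n k := by
  have h1 := card_fib (scl p e (k+1)).rangeRestrict (scl p e (k+1)).rangeRestrict_surjective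
    (fun y => dg (k+1) (co u e) y.1 = ((p * n : ℕ) : ZMod (p ^ (k+1))))
  rw [AddMonoidHom.ker_rangeRestrict, scl_ker] at h1
  have h3 : Nat.card {y : (scl p e (k+1)).range // dg (k+1) (co u e) y.1 = ((p * n : ℕ) : ZMod (p ^ (k+1)))}
      = ZZ (co u e) (p * n) (k+1) := by
    unfold ZZ
    refine Nat.card_congr ((Equiv.subtypeSubtypeEquivSubtypeInter (fun y => y ∈ (scl p e (k+1)).range)
      (fun y => dg (k+1) (co u e) y = ((p * n : ℕ) : ZMod (p ^ (k+1))))).trans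
      (Equiv.subtypeEquivRight fun y => ?_))
    rw [and_comm]
    refine and_congr Iff.rfl ?_
    simp only [co_unit hu e (Nat.succ_ne_zero k)]
    rw [AddMonoidHom.mem_range]
    constructor
    · rintro ⟨x, rfl⟩ i hi
      simp [scl, hi]
    · intro h
      have : ∀ i, ∃ x, (if e i = 0 then (p : ZMod (p ^ (k+1))) else 1) * x = y i := by
        intro i
        by_cases hi : e i = 0
        · obtain ⟨x, hx⟩ := h i hi
          exact ⟨x, by simp [hi, hx]⟩
        · exact ⟨y i, by simp [hi]⟩
      choose x hx using this
      exact ⟨x, funext hx⟩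
  rw [h3] at h1
  rw [← h1]
  have h5 := card_redV (p := p) k (fun y => dg k (co u (nx e)) y = n)
  unfold NN
  rw [← h5]
  refine Nat.card_congr (Equiv.subtypeEquivRight fun y => ?_)
  change dg (k+1) (co u e) (scl p e (k+1) y) = _ ↔ _
  have hd : dg (k+1) (co u e) (scl p e (k+1) y) = (p : ZMod (p ^ (k+1))) * dg (k+1) (co u (nx e)) y := by
    unfold dg
    rw [Finset.mul_sum]
    refine Finset.sum_congr rfl fun i _ => ?_
    simp only [co, scl, nx, map_mul, map_pow, map_natCast, AddMonoidHom.coe_mk, ZeroHom.coe_mk]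
    by_cases hi : e i = 0
    · simp only [hi, if_true]; ring
    · obtain ⟨m, hm⟩ := Nat.exists_eq_succ_of_ne_zero hi
      simp only [hm, Nat.succ_eq_add_one, Nat.add_sub_cancel, Nat.succ_ne_zero, if_false]
      ring
  rw [hd, Nat.cast_mul, ← sub_eq_zero, ← mul_sub]
  have := redm_eq_zero (p := p) (k := k) (j := 1) (m := k+1) (Nat.le_succ k) rfl
    (dg (k+1) (co u (nx e)) y - (n : ZMod (p ^ (k+1))))
  rw [pow_one] at this
  rw [← this, map_sub, dg_red, map_natCast, sub_eq_zero]

/-- normalized count -/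
noncomputable def nu (a : Fin 4 → ℤ_[p]) (n k : ℕ) : ℝ := (NN a n k : ℝ) / (p : ℝ) ^ (3 * k)

theorem nu_rec (h2 : p ≠ 2) {u : Fin 4 → ℤ_[p]} (hu : ∀ i, IsUnit (u i)) (e : Fin 4 → ℕ) (n k : ℕ) :
    nu (co u e) (p * n) (k+1) = (MM (co u e) (p * n) 1 : ℝ) / (p : ℝ) ^ 3
      + (p : ℝ) ^ (1 - nS e : ℤ) * nu (co u (nx e)) n k := by
  have hp0 : (p : ℝ) ≠ 0 := by exact_mod_cast hp.out.ne_zero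
  have h := ZZ_succ hu e n k
  unfold nu
  rw [NN_eq, MM_eq h2, zpow_sub₀ hp0, zpow_one, zpow_natCast]
  have h' : (ZZ (co u e) (p * n) (k+1) : ℝ) * (p : ℝ) ^ nS e = (p : ℝ) ^ 4 * NN (co u (nx e)) n k := by exact_mod_cast h
  push_cast
  rw [mul_add, pow_add, mul_one]
  have h'' : (ZZ (co u e) (p * n) (k+1) : ℝ) = (p : ℝ) ^ 4 * NN (co u (nx e)) n k / (p : ℝ) ^ nS e := by
    rw [← h', mul_div_cancel_right₀ _ (pow_ne_zero _ hp0)]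
  rw [h'']
  field_simp

theorem nu_rec0 (h2 : p ≠ 2) {u : Fin 4 → ℤ_[p]} (hu : ∀ i, IsUnit (u i)) (e : Fin 4 → ℕ) (n k : ℕ)
    (hn : ¬ p ∣ n) :
    nu (co u e) n (k+1) = (MM (co u e) n 1 : ℝ) / (p : ℝ) ^ 3 := by
  have hp0 : (p : ℝ) ≠ 0 := by exact_mod_cast hp.out.ne_zero
  unfold nu
  rw [NN_eq, MM_eq h2, ZZ_zero hu e n k hn, mul_add, pow_add]
  push_cast
  field_simp
  ring

/-- stabilization of the counts -/
theorem nu_stab (h2 : p ≠ 2) {u : Fin 4 → ℤ_[p]} (hu : ∀ i, IsUnit (u i)) (n : ℕ) (hn : 0 < n) :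
    ∀ e : Fin 4 → ℕ, ∃ β : ℝ, ∃ k0, ∀ k, k0 ≤ k → nu (co u e) n k = β := by
  induction n using Nat.strong_induction_on with
  | _ n ih =>
    intro e
    by_cases hd : p ∣ n
    · obtain ⟨m, rfl⟩ := hd
      have hm : 0 < m := Nat.pos_of_mul_pos_left hn
      obtain ⟨β, k0, h⟩ := ih m (by nlinarith [hp.out.two_le]) hm (nx e)
      refine ⟨(MM (co u e) (p * m) 1 : ℝ) / (p : ℝ) ^ 3 + (p : ℝ) ^ (1 - nS e : ℤ) * β, k0 + 1, fun k hk => ?_⟩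
      obtain ⟨k, rfl⟩ : ∃ j, k = j + 1 := ⟨k - 1, by omega⟩
      rw [nu_rec h2 hu, h k (by omega)]
    · refine ⟨(MM (co u e) n 1 : ℝ) / (p : ℝ) ^ 3, 1, fun k hk => ?_⟩
      obtain ⟨k, rfl⟩ : ∃ j, k = j + 1 := ⟨k - 1, by omega⟩
      exact nu_rec0 h2 hu e n k hd

end padic
end part4

section part5
open Finset

section padic
variable {p : ℕ} [hp : Fact p.Prime]

theorem MM1_ge (h2 : p ≠ 2) (a : Fin 4 → ℤ_[p]) (n : ℕ)
    (h : ∃ y : Fin 4 → ZMod (p ^ 1), dg 1 a y = n ∧ ∃ i, IsUnit (PadicInt.toZModPow 1 (a i) * y i)) :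
    1 - 1 / (p : ℝ) ≤ (MM a n 1 : ℝ) / (p : ℝ) ^ 3 := by
  have : Fact (p ^ 1).Prime := ⟨by simpa using hp.out⟩
  have hc : ringChar (ZMod (p ^ 1)) ≠ 2 := by
    rw [ZMod.ringChar_zmod_n, pow_one]; exact h2
  have := quad_count hc (fun i => PadicInt.toZModPow 1 (a i)) (n : ZMod (p ^ 1)) (by
    obtain ⟨y, hy, i, hi⟩ := h
    exact ⟨y, hy, i, hi.ne_zero⟩)
  have e : Nat.card {y : Fin 4 → ZMod (p ^ 1) // ∑ i, PadicInt.toZModPow 1 (a i) * y i ^ 2 = (n : ZMod (p ^ 1)) ∧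
     ∃ i, PadicInt.toZModPow 1 (a i) * y i ≠ 0} = MM a n 1 := by
    unfold MM
    refine Nat.card_congr (Equiv.subtypeEquivRight fun y => ?_)
    refine and_congr Iff.rfl (exists_congr fun i => ?_)
    rw [isUnit_iff_ne_zero]
  rw [e, ZMod.card, pow_one] at this
  have hp0 : (0 : ℝ) < p := by exact_mod_cast hp.out.pos
  have h' : (p : ℝ) ^ 3 ≤ MM a n 1 + (p : ℝ) ^ 2 := by exact_mod_cast this
  rw [le_div_iff₀ (by positivity)]
  have : (1 - 1 / (p : ℝ)) * (p : ℝ) ^ 3 = (p : ℝ) ^ 3 - (p : ℝ) ^ 2 := by field_simp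
  linarith

theorem nu_nonneg (a : Fin 4 → ℤ_[p]) (n k : ℕ) : 0 ≤ nu a n k := by unfold nu; positivity

theorem lower_base (h2 : p ≠ 2) {u : Fin 4 → ℤ_[p]} (hu : ∀ i, IsUnit (u i)) (e : Fin 4 → ℕ) (n : ℕ)
    (h : ∃ y : Fin 4 → ZMod (p ^ 1), dg 1 (co u e) y = n ∧ ∃ i, IsUnit (PadicInt.toZModPow 1 (co u e i) * y i))
    (k : ℕ) (hk : 1 ≤ k) : 1 - 1 / (p : ℝ) ≤ nu (co u e) n k := by
  refine (MM1_ge h2 _ _ h).trans ?_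
  obtain ⟨k, rfl⟩ : ∃ j, k = j + 1 := ⟨k - 1, by omega⟩
  by_cases hd : p ∣ n
  · obtain ⟨m, rfl⟩ := hd
    rw [nu_rec h2 hu]
    have := nu_nonneg (co u (nx e)) m k
    have : 0 ≤ (p : ℝ) ^ (1 - nS e : ℤ) * nu (co u (nx e)) m k := by positivity
    linarith
  · rw [nu_rec0 h2 hu e n k hd]

theorem lower_step (h2 : p ≠ 2) {u : Fin 4 → ℤ_[p]} (hu : ∀ i, IsUnit (u i)) (e : Fin 4 → ℕ) (m k0 : ℕ) (c : ℝ)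
    (h : ∀ k, k0 ≤ k → c ≤ nu (co u (nx e)) m k) (k : ℕ) (hk : k0 + 1 ≤ k) :
    (p : ℝ) ^ (1 - nS e : ℤ) * c ≤ nu (co u e) (p * m) k := by
  obtain ⟨k, rfl⟩ : ∃ j, k = j + 1 := ⟨k - 1, by omega⟩
  rw [nu_rec h2 hu]
  have h1 : (p : ℝ) ^ (1 - nS e : ℤ) * c ≤ (p : ℝ) ^ (1 - nS e : ℤ) * nu (co u (nx e)) m k :=
    mul_le_mul_of_nonneg_left (h k (by omega)) (by positivity)
  have h3 : 0 ≤ (MM (co u e) (p * m) 1 : ℝ) / (p : ℝ) ^ 3 := by positivity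
  linarith

theorem desc (u : Fin 4 → ℤ_[p]) (e : Fin 4 → ℕ) (n : ℕ) (x : Fin 4 → ℤ_[p])
    (hx : ∑ i, co u e i * x i ^ 2 = n) (hS : ∀ i, e i = 0 → (p : ℤ_[p]) ∣ x i) :
    ∃ m, n = p * m ∧ ∃ x' : Fin 4 → ℤ_[p], ∑ i, co u (nx e) i * x' i ^ 2 = m ∧ ∀ i, e i ≠ 0 → x' i = x i := by
  have : ∀ i, ∃ z, x i = (if e i = 0 then (p : ℤ_[p]) else 1) * z := by
    intro i
    by_cases hi : e i = 0
    · obtain ⟨z, hz⟩ := hS i hi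
      exact ⟨z, by simp [hi, hz]⟩
    · exact ⟨x i, by simp [hi]⟩
  choose x' hx' using this
  have hsum : ∑ i, co u e i * x i ^ 2 = p * ∑ i, co u (nx e) i * x' i ^ 2 := by
    rw [Finset.mul_sum]
    refine Finset.sum_congr rfl fun i _ => ?_
    rw [hx' i]
    simp only [co, nx]
    by_cases hi : e i = 0
    · simp only [hi, if_true]; ring
    · obtain ⟨m, hm⟩ := Nat.exists_eq_succ_of_ne_zero hi
      simp only [hm, Nat.succ_eq_add_one, Nat.add_sub_cancel, Nat.succ_ne_zero, if_false]
      ring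
  have hd : p ∣ n := by
    have h1 : (p : ℤ_[p]) ^ 1 ∣ ((n : ℤ) : ℤ_[p]) := by
      rw [pow_one, Int.cast_natCast, ← hx, hsum]; exact dvd_mul_right _ _
    rw [PadicInt.pow_p_dvd_int_iff, pow_one] at h1
    exact_mod_cast h1
  obtain ⟨m, rfl⟩ := hd
  refine ⟨m, rfl, x', ?_, fun i hi => ?_⟩
  · rw [hsum, Nat.cast_mul] at hx
    exact mul_left_cancel₀ (by exact_mod_cast hp.out.ne_zero) hx
  · rw [hx' i]; simp [hi]

theorem sum_nx (e : Fin 4 → ℕ) : ∑ i, nx e i + 4 = ∑ i, e i + 2 * nS e := by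
  simp only [nS, nx, Finset.card_filter, Fin.sum_univ_four]
  split_ifs <;> omega

theorem sum_ge (e : Fin 4 → ℕ) : 4 ≤ ∑ i, e i + nS e := by
  simp only [nS, Finset.card_filter, Fin.sum_univ_four]
  split_ifs <;> omega

theorem nS_nx (e : Fin 4 → ℕ) (h : 4 ≤ nS e + nS (nx e)) (i : Fin 4) (hi : e i ≠ 0) : nx e i = 0 := by
  have hle : ∀ j, (if e j = 0 then 1 else 0) + (if nx e j = 0 then 1 else 0) ≤ 1 := by
    intro j
    rcases h : e j with _ | _ | n <;> simp [nx, h]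
  by_contra hi'
  have : ∑ j, ((if e j = 0 then 1 else 0) + (if nx e j = 0 then 1 else 0)) < ∑ j : Fin 4, 1 :=
    Finset.sum_lt_sum (fun j _ => hle j) ⟨i, mem_univ _, by simp [hi, hi']⟩
  rw [Finset.sum_add_distrib, ← Finset.card_filter, ← Finset.card_filter] at this
  simp at this
  unfold nS at h
  omega

theorem nS_nxnx (e : Fin 4 → ℕ) : nS e ≤ nS (nx (nx e)) := by
  unfold nS
  refine Finset.card_le_card fun i hi => ?_
  simp only [Finset.mem_filter, Finset.mem_univ, true_and] at hi ⊢
  simp [nx, hi]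

theorem red1_dvd (x : ℤ_[p]) (h : ((p : ℕ) : ZMod (p ^ 1)) ∣ PadicInt.toZModPow 1 x) : (p : ℤ_[p]) ∣ x := by
  have hz : ((p : ℕ) : ZMod (p ^ 1)) = 0 := by
    rw [ZMod.natCast_eq_zero_iff, pow_one]
  rw [hz, zero_dvd_iff, ← RingHom.mem_ker, PadicInt.ker_toZModPow, Ideal.mem_span_singleton, pow_one] at h
  exact h

/-- a solution in `ℤ_p` with a unit coordinate in the unit block gives a nonsingular solution mod `p` -/
theorem nonsing_of {u : Fin 4 → ℤ_[p]} (hu : ∀ i, IsUnit (u i)) (e : Fin 4 → ℕ) (n : ℕ) (x : Fin 4 → ℤ_[p])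
    (hx : ∑ i, co u e i * x i ^ 2 = n) (i : Fin 4) (hi : e i = 0) (hxi : ¬ (p : ℤ_[p]) ∣ x i) :
    ∃ y : Fin 4 → ZMod (p ^ 1), dg 1 (co u e) y = n ∧ ∃ i, IsUnit (PadicInt.toZModPow 1 (co u e i) * y i) := by
  refine ⟨fun i => PadicInt.toZModPow 1 (x i), ?_, i, ?_⟩
  · unfold dg
    rw [← map_natCast (PadicInt.toZModPow (p := p) 1) n, ← hx, map_sum]
    simp
  · by_contra h
    rw [co_unit hu e one_ne_zero] at h
    exact hxi (red1_dvd _ (h hi))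

/-- three unit coefficients: isotropic -/
theorem nonsing_three (h2 : p ≠ 2) {u : Fin 4 → ℤ_[p]} (hu : ∀ i, IsUnit (u i)) (e : Fin 4 → ℕ) (m : ℕ)
    (h3 : 3 ≤ nS e) :
    ∃ y : Fin 4 → ZMod (p ^ 1), dg 1 (co u e) y = (p * m : ℕ) ∧ ∃ i, IsUnit (PadicInt.toZModPow 1 (co u e i) * y i) := by
  have : Fact (p ^ 1).Prime := ⟨by simpa using hp.out⟩
  obtain ⟨i, hi, j, hj, l, hl, hij, hil, hjl⟩ := Finset.two_lt_card.1 (show 2 < _ from h3)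
  simp only [mem_filter, mem_univ, true_and] at hi hj hl
  let a : Fin 4 → ZMod (p ^ 1) := fun i => PadicInt.toZModPow 1 (co u e i)
  have hau : ∀ i, e i = 0 → a i ≠ 0 := by
    intro i hi
    have : IsUnit (a i) := by
      simp only [a, co, hi, pow_zero, one_mul]
      exact (hu i).map _
    exact this.ne_zero
  obtain ⟨s, t, hst⟩ : ∃ s t : ZMod (p ^ 1), a i * s ^ 2 + a j * t ^ 2 = - a l := by
    have hF : Fintype.card (ZMod (p ^ 1)) % 2 = 1 := FiniteField.odd_card_of_char_ne_two (by
      rw [ZMod.ringChar_zmod_n, pow_one]; exact h2)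
    have h1 := hau i hi
    have h4 := hau j hj
    open Polynomial in
    obtain ⟨s, t, h⟩ := FiniteField.exists_root_sum_quadratic (R := ZMod (p ^ 1))
      (f := C (a i) * X ^ 2) (g := C (a j) * X ^ 2 + C (a l))
      (by compute_degree!) (by compute_degree!) hF
    refine ⟨s, t, ?_⟩
    simp at h
    linear_combination h
  refine ⟨Pi.single i s + Pi.single j t + Pi.single l 1, ?_, l, ?_⟩
  · have hz : ((p * m : ℕ) : ZMod (p ^ 1)) = 0 := by
      rw [ZMod.natCast_eq_zero_iff, pow_one]; exact dvd_mul_right _ _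
    rw [hz]
    unfold dg
    change ∑ r, a r * _ = 0
    have : ∀ r, a r * ((Pi.single i s + Pi.single j t + Pi.single l 1 : Fin 4 → ZMod (p ^ 1)) r) ^ 2
       = (if r = i then a i * s ^ 2 else 0) + (if r = j then a j * t ^ 2 else 0) + (if r = l then a l else 0) := by
      intro r
      simp only [Pi.add_apply, Pi.single_apply]
      by_cases h1 : r = i
      · subst h1; simp [hij, hil]
      · by_cases h3 : r = j
        · subst h3; simp [h1, hjl]
        · by_cases h4 : r = l
          · subst h4; simp [h1, h3]
          · simp [h1, h3, h4]
    rw [Finset.sum_congr rfl fun r _ => this r]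
    simp only [Finset.sum_add_distrib, Finset.sum_ite_eq', mem_univ, if_true]
    rw [hst]; ring
  · simp only [Pi.add_apply, Pi.single_apply, hil.symm, hjl.symm, if_true, if_false, zero_add, mul_one]
    exact isUnit_iff_ne_zero.2 (hau l hl)

/-- exponent in the lower bound -/
def gex (e : Fin 4 → ℕ) : ℕ := (∑ i, e i) / 2 - (if nS e = 1 then 1 else 0)

theorem lower (h2 : p ≠ 2) {u : Fin 4 → ℤ_[p]} (hu : ∀ i, IsUnit (u i)) (n : ℕ) (hn : 0 < n) :
    ∀ e : Fin 4 → ℕ, 1 ≤ nS e → ∀ x : Fin 4 → ℤ_[p], ∑ i, co u e i * x i ^ 2 = n →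
      (∃ i, ¬ (p : ℤ_[p]) ∣ x i) →
      ∃ k0, ∀ k, k0 ≤ k → (p : ℝ) ^ (-(gex e : ℤ)) * (1 - 1 / (p : ℝ)) ≤ nu (co u e) n k := by
  have hp1 : (1 : ℝ) ≤ p := by exact_mod_cast hp.out.one_le
  have hp0 : (p : ℝ) ≠ 0 := by positivity
  have hc : 0 ≤ 1 - 1 / (p : ℝ) := by
    rw [sub_nonneg, div_le_one (by positivity)]; exact hp1
  have hmono : ∀ a b : ℤ, a ≤ b → (p : ℝ) ^ a * (1 - 1 / (p : ℝ)) ≤ (p : ℝ) ^ b * (1 - 1 / (p : ℝ)) := fun a b h =>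
    mul_le_mul_of_nonneg_right (zpow_le_zpow_right₀ hp1 h) hc
  induction n using Nat.strong_induction_on with
  | _ n ih =>
    intro e he x hx hprim
    by_cases hns : ∃ y : Fin 4 → ZMod (p ^ 1), dg 1 (co u e) y = n ∧
        ∃ i, IsUnit (PadicInt.toZModPow 1 (co u e i) * y i)
    · refine ⟨1, fun k hk => le_trans ?_ (lower_base h2 hu e n hns k hk)⟩
      have := hmono (-(gex e : ℤ)) 0 (by omega)
      rwa [zpow_zero, one_mul] at this
    have hS : ∀ i, e i = 0 → (p : ℤ_[p]) ∣ x i := by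
      intro i hi
      by_contra hxi
      exact hns (nonsing_of hu e n x hx i hi hxi)
    obtain ⟨m, rfl, x', hx', hxx⟩ := desc u e n x hx hS
    have hm : 0 < m := Nat.pos_of_mul_pos_left hn
    have hmlt : m < p * m := by nlinarith [hp.out.two_le]
    obtain ⟨i, hi⟩ := hprim
    have hei : e i ≠ 0 := fun h => hi (hS i h)
    have hi' : ¬ (p : ℤ_[p]) ∣ x' i := by rwa [hxx i hei]
    have h3 : nS e ≤ 2 := by
      by_contra h
      exact hns (nonsing_three h2 hu e m (by omega))
    have hs1 := sum_nx e
    have hs2 := sum_ge e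
    by_cases hS' : ∀ i, nx e i ≠ 0
    · obtain ⟨m', rfl, x'', hx'', hxx'⟩ := desc u (nx e) m x' hx' (fun i h => absurd h (hS' i))
      have hm' : 0 < m' := Nat.pos_of_mul_pos_left hm
      have hs3 := sum_nx (nx e)
      have hs4 : nS (nx e) = 0 := by
        unfold nS; rw [Finset.card_eq_zero, Finset.filter_eq_empty_iff]; exact fun i _ => hS' i
      have hs5 := nS_nxnx e
      obtain ⟨k0, hk0⟩ := ih m' (by nlinarith [hp.out.two_le]) hm' (nx (nx e)) (by omega) x'' hx''
        ⟨i, by rwa [hxx' i (hS' i)]⟩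
      refine ⟨k0 + 1 + 1, fun k hk => le_trans ?_ (lower_step h2 hu e (p * m') (k0+1) _
        (fun k hk => lower_step h2 hu (nx e) m' k0 _ hk0 k hk) k hk)⟩
      rw [← mul_assoc, ← mul_assoc, ← zpow_add₀ hp0, ← zpow_add₀ hp0]
      apply hmono
      unfold gex
      split_ifs <;> omega
    · push Not at hS'
      have hne : 1 ≤ nS (nx e) := by
        obtain ⟨j, hj⟩ := hS'
        exact Finset.card_pos.2 ⟨j, by simp [hj]⟩
      by_cases hspec : nS e = 2 ∧ 2 ≤ nS (nx e)
      · have hz := nS_nx e (by omega) i hei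
        have hb := lower_base h2 hu (nx e) m (nonsing_of hu (nx e) m x' hx' i hz hi')
        refine ⟨1 + 1, fun k hk => le_trans ?_ (lower_step h2 hu e m 1 _ hb k hk)⟩
        apply hmono
        unfold gex
        split_ifs <;> omega
      · obtain ⟨k0, hk0⟩ := ih m hmlt hm (nx e) hne x' hx' ⟨i, hi'⟩
        refine ⟨k0 + 1, fun k hk => le_trans ?_ (lower_step h2 hu e m k0 _ hk0 k hk)⟩
        rw [← mul_assoc, ← zpow_add₀ hp0]
        apply hmono
        unfold gex
        split_ifs <;> omega

end padic
end part5

section part6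
open Finset

theorem exists_min {R : Type*} [CommRing R] [IsDomain R] [IsPrincipalIdealRing R] [IsLocalRing R]
    {M : Type*} [AddCommGroup M] [Module R M] (B : LinearMap.BilinForm R M) (h : ∃ v, B v v ≠ 0) :
    ∃ v, B v v ≠ 0 ∧ ∀ w, B v v ∣ B w w := by
  have : ValuationRing R := inferInstance
  obtain ⟨c, ⟨⟨v, rfl⟩, hv0⟩, hmin⟩ := wellFounded_dvdNotUnit.has_min
    {c : R | (∃ v, B v v = c) ∧ c ≠ 0} (by obtain ⟨v, hv⟩ := h; exact ⟨_, ⟨v, rfl⟩, hv⟩)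
  refine ⟨v, hv0, fun w => ?_⟩
  by_cases hw : B w w = 0
  · rw [hw]; exact dvd_zero _
  by_contra hd
  rcases ValuationRing.dvd_total (B v v) (B w w) with h | h
  · exact hd h
  · exact hmin _ ⟨⟨w, rfl⟩, hw⟩ (dvdNotUnit_of_dvd_of_not_dvd h hd)

universe v
theorem exists_diag {R : Type*} [CommRing R] [IsDomain R] [IsPrincipalIdealRing R] [IsLocalRing R]
    (h2 : IsUnit (2 : R)) (n : ℕ) : ∀ {M : Type v} [AddCommGroup M] [Module R M] [Module.Free R M] [Module.Finite R M]
    (B : LinearMap.BilinForm R M) (_ : ∀ x y, B x y = B y x) (_ : Module.finrank R M = n),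
    ∃ b : Module.Basis (Fin n) R M, ∀ i j, i ≠ j → B (b i) (b j) = 0 := by
  induction n with
  | zero =>
    intro M _ _ _ _ B _ hn
    exact ⟨Module.finBasisOfFinrankEq R M hn, fun i => i.elim0⟩
  | succ n ih =>
    intro M _ _ _ _ B hs hn
    have hpol : ∀ x y, 2 * B x y = B (x + y) (x + y) - B x x - B y y := by
      intro x y
      simp only [map_add, LinearMap.add_apply]
      rw [hs y x]; ring
    by_cases h : ∃ v, B v v ≠ 0
    · obtain ⟨v, hv, hd⟩ := exists_min B h
      have hd' : ∀ y, B v v ∣ B v y := by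
        intro y
        rw [← h2.dvd_mul_left, hpol]
        exact dvd_sub (dvd_sub (hd _) (hd _)) (hd _)
      let N : Submodule R M := LinearMap.ker (B v)
      let m := Module.finrank R N
      let bN : Module.Basis (Fin m) R N := Module.finBasis R N
      have hli : ∀ (c : R), ∀ x ∈ N, c • v + x = 0 → c = 0 := by
        intro c x hx h0
        have hx : B v x = 0 := hx
        have := congrArg (B v) h0
        simp only [map_add, map_smul, hx, map_zero, smul_eq_mul, add_zero] at this
        exact (mul_eq_zero.1 this).resolve_right hv
      have hsp : ∀ z : M, ∃ c : R, z + c • v ∈ N := by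
        intro z
        obtain ⟨c, hc⟩ := hd' z
        refine ⟨-c, ?_⟩
        change B v _ = 0
        rw [map_add, map_smul, hc, smul_eq_mul]; ring
      have hm : m = n := by
        have := Module.finrank_eq_card_basis (Module.Basis.mkFinCons v bN hli hsp)
        rw [hn, Fintype.card_fin] at this
        omega
      obtain ⟨b, hb⟩ := ih (M := N) (B.restrict N) (fun x y => hs _ _) hm
      refine ⟨Module.Basis.mkFinCons v b hli hsp, ?_⟩
      rw [Module.Basis.coe_mkFinCons]
      intro i j
      refine Fin.cases ?_ (fun i => ?_) i <;> refine Fin.cases ?_ (fun j => ?_) j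
      · intro h; exact absurd rfl h
      · intro _; simp only [Fin.cons_zero, Fin.cons_succ]; exact (b j).2
      · intro _; simp only [Fin.cons_zero, Fin.cons_succ]; rw [hs]; exact (b i).2
      · intro h; simp only [Fin.cons_succ]
        exact hb i j (fun h' => h (by rw [h']))
    · push Not at h
      refine ⟨Module.finBasisOfFinrankEq R M hn, fun i j _ => ?_⟩
      apply (h2.mul_right_eq_zero).1
      rw [hpol, h, h, h]; ring

theorem exists_diag_matrix {R : Type} [CommRing R] [IsDomain R] [IsPrincipalIdealRing R] [IsLocalRing R]
    (h2 : IsUnit (2 : R)) (A : Matrix (Fin 4) (Fin 4) R) (hA : A.IsSymm) :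
    ∃ (P : Matrix (Fin 4) (Fin 4) R) (D : Fin 4 → R), IsUnit P.det ∧ P.transpose * A * P = Matrix.diagonal D := by
  obtain ⟨b, hb⟩ := exists_diag h2 4 (M := Fin 4 → R) (Matrix.toBilin' A) (by
    intro x y
    rw [Matrix.toBilin'_apply', Matrix.toBilin'_apply', dotProduct_comm, Matrix.dotProduct_mulVec,
      ← Matrix.mulVec_transpose, hA.eq, dotProduct_comm, dotProduct_comm]
    ) (by simp)
  let P := (Pi.basisFun R (Fin 4)).toMatrix b
  refine ⟨P, fun i => Matrix.toBilin' A (b i) (b i), ?_, ?_⟩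
  · exact (Matrix.isUnit_iff_isUnit_det _).1 (@isUnit_of_invertible _ _ P ((Pi.basisFun R (Fin 4)).invertibleToMatrix b))
  · ext i j
    have : (P.transpose * A * P) i j = Matrix.toBilin' A (b i) (b j) := by
      rw [Matrix.toBilin'_apply', Matrix.mul_assoc, Matrix.mul_apply]
      rfl
    rw [this, Matrix.diagonal_apply]
    split_ifs with h
    · rw [h]
    · exact hb i j h
end part6

section part7
open Finset

theorem two_Qval {R : Type*} [CommRing R] (A : Matrix (Fin 4) (Fin 4) ℤ) (hA : IsGram A) (x : Fin 4 → R) :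
    2 * Qval A x = x ⬝ᵥ (A.map (Int.cast : ℤ → R)).mulVec x := by
  obtain ⟨hs, he⟩ := hA
  have hd : ∀ i, ((A i i : ℤ) : R) = 2 * ((A i i / 2 : ℤ) : R) := by
    intro i
    rw [← Int.cast_two, ← Int.cast_mul, Int.mul_ediv_cancel' (he i)]
  have h10 : A 1 0 = A 0 1 := hs.apply 0 1
  have h20 : A 2 0 = A 0 2 := hs.apply 0 2
  have h30 : A 3 0 = A 0 3 := hs.apply 0 3
  have h21 : A 2 1 = A 1 2 := hs.apply 1 2
  have h31 : A 3 1 = A 1 3 := hs.apply 1 3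
  have h32 : A 3 2 = A 2 3 := hs.apply 2 3
  have i0 : (Finset.Ioi (0 : Fin 4)) = {1, 2, 3} := by decide
  have i1 : (Finset.Ioi (1 : Fin 4)) = {2, 3} := by decide
  have i2 : (Finset.Ioi (2 : Fin 4)) = {3} := by decide
  have i3 : (Finset.Ioi (3 : Fin 4)) = ∅ := by decide
  simp only [Qval, Matrix.mulVec, dotProduct, Fin.sum_univ_four, Matrix.map_apply, hd, i0, i1, i2, i3,
    h10, h20, h30, h21, h31, h32]
  rw [Finset.sum_insert (by decide), Finset.sum_insert (by decide), Finset.sum_insert (by decide)]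
  simp only [Finset.sum_singleton, Finset.sum_empty]
  ring

theorem diag_form {R : Type*} [CommRing R] (A P : Matrix (Fin 4) (Fin 4) R) (D : Fin 4 → R)
    (h : P.transpose * A * P = Matrix.diagonal D) (y : Fin 4 → R) :
    (P.mulVec y) ⬝ᵥ A.mulVec (P.mulVec y) = ∑ i, D i * y i ^ 2 := by
  have : (P.mulVec y) ⬝ᵥ A.mulVec (P.mulVec y) = y ⬝ᵥ (P.transpose * A * P).mulVec y := by
    rw [← Matrix.mulVec_mulVec, ← Matrix.mulVec_mulVec, Matrix.dotProduct_mulVec y, Matrix.vecMul_transpose]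
  rw [this, h]
  simp only [dotProduct, Matrix.mulVec_diagonal]
  exact Finset.sum_congr rfl fun i _ => by ring

section padic
variable {p : ℕ} [hp : Fact p.Prime]

theorem two_unit (h2 : p ≠ 2) (k : ℕ) : IsUnit (2 : ZMod (p ^ k)) := by
  have : ((2 : ℕ) : ZMod (p ^ k)) = 2 := by norm_cast
  rw [← this, ZMod.isUnit_iff_coprime]
  exact Nat.Coprime.pow_right _ ((Nat.coprime_primes Nat.prime_two hp.out).2 (Ne.symm h2))

theorem two_unit_padic (h2 : p ≠ 2) : IsUnit (2 : ℤ_[p]) := by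
  have : ((2 : ℕ) : ℤ_[p]) = 2 := by norm_cast
  rw [← this, PadicInt.isUnit_iff, PadicInt.norm_natCast_eq_one_iff]
  exact ((Nat.coprime_primes hp.out Nat.prime_two).2 h2)

theorem count_eq (h2 : p ≠ 2) (A : Matrix (Fin 4) (Fin 4) ℤ) (hA : IsGram A) (P : Matrix (Fin 4) (Fin 4) ℤ_[p])
    (D : Fin 4 → ℤ_[p]) (hP : IsUnit P.det)
    (h : P.transpose * A.map (Int.cast : ℤ → ℤ_[p]) * P = Matrix.diagonal D) (n k : ℕ) :
    localCount A p n k = NN D (2 * n) k := by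
  let f : ℤ_[p] →+* ZMod (p ^ k) := PadicInt.toZModPow k
  let P' : Matrix (Fin 4) (Fin 4) (ZMod (p ^ k)) := P.map f
  have hP' : IsUnit P'.det := by
    have : P'.det = f P.det := by
      rw [RingHom.map_det]; rfl
    rw [this]; exact hP.map f
  have h' : P'.transpose * A.map (Int.cast : ℤ → ZMod (p ^ k)) * P' = Matrix.diagonal (fun i => f (D i)) := by
    have := congrArg (fun M => M.map f) h
    simp only [Matrix.map_mul, Matrix.diagonal_map (map_zero f)] at this
    rw [Matrix.map_map] at this
    convert this using 3
    all_goals (ext i j; simp [P'])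
  unfold localCount NN
  symm
  have hPu : IsUnit P' := (Matrix.isUnit_iff_isUnit_det _).2 hP'
  have hbij : Function.Bijective P'.mulVec :=
    ⟨Matrix.mulVec_injective_of_isUnit hPu, Matrix.mulVec_surjective_iff_isUnit.2 hPu⟩
  refine Nat.card_congr (Equiv.subtypeEquiv (Equiv.ofBijective _ hbij) fun y => ?_)
  rw [Equiv.ofBijective_apply, ← (two_unit h2 k).mul_right_inj (b := Qval A _), two_Qval A hA, diag_form _ _ _ h' y]
  unfold dg
  push_cast
  rfl

theorem det_val (d : ℤ) (hd : d ≠ 0) (s : ℕ) (w : ℤ_[p]) (hw : IsUnit w)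
    (h : (d : ℤ_[p]) = w * (p : ℤ_[p]) ^ s) : d.natAbs.factorization p = s := by
  have key : ∀ j, (p : ℤ) ^ j ∣ d ↔ j ≤ s := by
    intro j
    rw [← PadicInt.pow_p_dvd_int_iff, h, hw.dvd_mul_left]
    exact pow_dvd_pow_iff PadicInt.prime_p.ne_zero PadicInt.prime_p.not_isUnit
  have key2 : ∀ j, p ^ j ∣ d.natAbs ↔ j ≤ s := by
    intro j
    rw [← key j, ← Int.natCast_dvd]; push_cast; rfl
  have h0 : d.natAbs ≠ 0 := by simpa using hd
  apply le_antisymm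
  · rw [← key2]; exact Nat.ordProj_dvd _ _
  · exact (hp.out.pow_dvd_iff_le_factorization h0).1 ((key2 s).2 le_rfl)

end padic
end part7

/-- Lemma 2, part 2 (odd primes): if `n` is primitively represented over `ℤ_p` then
`β_p(Q;n) ≥ p^(-⌊ord_p(D(Q))/2⌋) (1 - 1/p)`. -/
theorem local_density_primitive_odd
    (A : Matrix (Fin 4) (Fin 4) ℤ) (p n : ℕ) [Fact p.Prime]
    (hA : IsGram A) (hprim : IsPrimitiveQF A) (hpd : PosDefQF A)
    (hodd : p ≠ 2) (hn : 0 < n)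
    (h : ∃ x : Fin 4 → ℤ_[p], Qval A x = (n : ℤ_[p]) ∧ ¬ ∀ i, (p : ℤ_[p]) ∣ x i) :
    DensityBound A p n
      ((p : ℝ) ^ (-((A.det.natAbs.factorization p / 2 : ℕ) : ℝ)) * (1 - 1 / (p : ℝ))) := by
  have hp : p.Prime := Fact.out
  obtain ⟨P, D, hP, hD⟩ := exists_diag_matrix (two_unit_padic hodd) (A.map (Int.cast : ℤ → ℤ_[p]))
    (by ext i j; simp [hA.1.apply i j])
  have hPu : IsUnit P := (Matrix.isUnit_iff_isUnit_det _).2 hP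
  have hdet : A.det ≠ 0 := by
    have h1 := hpd.det_pos
    have h3 : (A.map (Int.cast : ℤ → ℝ)).det = ((A.det : ℤ) : ℝ) := by
      exact (Int.cast_det A).symm
    intro h0
    rw [h3, h0] at h1
    simp at h1
  have hdetp : (A.map (Int.cast : ℤ → ℤ_[p])).det = ((A.det : ℤ) : ℤ_[p]) := by
    exact (Int.cast_det A).symm
  have hprod : P.det * P.det * ((A.det : ℤ) : ℤ_[p]) = ∏ i, D i := by
    rw [← Matrix.det_diagonal, ← hD, Matrix.det_mul, Matrix.det_mul, Matrix.det_transpose, hdetp]; ring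
  have hD0 : ∀ i, D i ≠ 0 := by
    have : ∏ i, D i ≠ 0 := by
      rw [← hprod]
      exact mul_ne_zero (mul_ne_zero hP.ne_zero hP.ne_zero) (by exact_mod_cast hdet)
    rw [Finset.prod_ne_zero_iff] at this
    exact fun i => this i (Finset.mem_univ i)
  let e : Fin 4 → ℕ := fun i => (D i).valuation
  let u : Fin 4 → ℤ_[p] := fun i => (PadicInt.unitCoeff (hD0 i) : ℤ_[p])
  have hu : ∀ i, IsUnit (u i) := fun i => Units.isUnit _
  have hDc : D = co u e := by
    funext i
    rw [co, mul_comm]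
    exact PadicInt.unitCoeff_spec (hD0 i)
  have hsum : A.det.natAbs.factorization p = ∑ i, e i := by
    have hPP : IsUnit (P.det * P.det) := hP.mul hP
    obtain ⟨w, hw⟩ := hPP
    refine det_val A.det hdet _ (((w⁻¹ : ℤ_[p]ˣ) : ℤ_[p]) * ∏ i, u i) ?_ ?_
    · exact (Units.isUnit _).mul (Finset.prod_induction _ _ (fun _ _ => IsUnit.mul) isUnit_one fun i _ => hu i)
    · rw [← Finset.prod_pow_eq_pow_sum, mul_assoc, ← Finset.prod_mul_distrib, Units.eq_inv_mul_iff_mul_eq, hw, hprod, hDc]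
      exact Finset.prod_congr rfl fun i _ => by rw [co, mul_comm]
  have hinv : P⁻¹ * P = 1 := Matrix.nonsing_inv_mul _ hP
  have hinv' : P * P⁻¹ = 1 := Matrix.mul_nonsing_inv _ hP
  have hnS : 1 ≤ nS e := by
    by_contra hlt
    have hall : ∀ i, e i ≠ 0 := by
      intro i hi
      exact hlt (Finset.card_pos.2 ⟨i, by simp [hi]⟩)
    have hpD : ∀ i, (p : ℤ_[p]) ∣ D i := by
      intro i
      rw [hDc]
      exact Dvd.dvd.mul_right (dvd_pow_self _ (hall i)) _
    choose D' hD' using hpD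
    have hAeq : A.map (Int.cast : ℤ → ℤ_[p]) = (p : ℤ_[p]) • ((P⁻¹).transpose * Matrix.diagonal D' * P⁻¹) := by
      have hDD : Matrix.diagonal D = (p : ℤ_[p]) • Matrix.diagonal D' := by
        rw [← Matrix.diagonal_smul]; congr 1; funext i; simp [hD' i]
      have ht : (P⁻¹).transpose * P.transpose = 1 := by
        rw [← Matrix.transpose_mul, hinv', Matrix.transpose_one]
      calc A.map (Int.cast : ℤ → ℤ_[p]) = ((P⁻¹).transpose * P.transpose) * A.map (Int.cast : ℤ → ℤ_[p]) * (P * P⁻¹) := by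
            rw [ht, hinv', Matrix.one_mul, Matrix.mul_one]
        _ = (P⁻¹).transpose * (P.transpose * A.map (Int.cast : ℤ → ℤ_[p]) * P) * P⁻¹ := by
            simp only [Matrix.mul_assoc]
        _ = _ := by rw [hD, hDD, Matrix.mul_smul, Matrix.smul_mul]
    have hdvd : ∀ i j, (p : ℤ) ∣ A i j := by
      intro i j
      have h1 := PadicInt.pow_p_dvd_int_iff (p := p) 1 (A i j)
      rw [pow_one, pow_one] at h1
      rw [← h1]
      have h3 := congrFun (congrFun hAeq i) j
      rw [Matrix.map_apply, Matrix.smul_apply, smul_eq_mul] at h3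
      rw [h3]; exact dvd_mul_right _ _
    have hunit := hprim p (fun i => by
      have h1 : (p : ℤ) ∣ 2 * (A i i / 2) := by
        rw [Int.mul_ediv_cancel' (hA.2 i)]; exact hdvd i i
      refine IsCoprime.dvd_of_dvd_mul_left ?_ h1
      have := (Nat.isCoprime_iff_coprime (m := p) (n := 2)).2 ((Nat.coprime_primes hp Nat.prime_two).2 hodd)
      exact_mod_cast this) (fun i j _ => hdvd i j)
    exact (Nat.prime_iff_prime_int.1 hp).not_isUnit hunit
  obtain ⟨x, hx, hxp⟩ := h
  let x' : Fin 4 → ℤ_[p] := P⁻¹.mulVec x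
  have hxx' : P.mulVec x' = x := by
    simp only [x', Matrix.mulVec_mulVec, hinv', Matrix.one_mulVec]
  have hx' : ∑ i, co u e i * x' i ^ 2 = ((2 * n : ℕ) : ℤ_[p]) := by
    rw [← hDc, ← diag_form _ _ _ hD x', hxx', ← two_Qval A hA, hx]
    push_cast; rfl
  have hxp' : ∃ i, ¬ (p : ℤ_[p]) ∣ x' i := by
    by_contra hcon
    push Not at hcon
    apply hxp
    intro i
    rw [← hxx', Matrix.mulVec, dotProduct]
    exact Finset.dvd_sum fun j _ => Dvd.dvd.mul_left (hcon j) _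
  obtain ⟨β, k1, hk1⟩ := nu_stab hodd hu (2 * n) (by omega) e
  obtain ⟨k2, hk2⟩ := lower hodd hu (2 * n) (by omega) e hnS x' hx' hxp'
  have hnu : ∀ k, (localCount A p n k : ℝ) / (p : ℝ) ^ (3 * k) = nu (co u e) (2 * n) k := by
    intro k
    rw [count_eq hodd A hA P D hP hD n k, hDc]; rfl
  refine ⟨β, ?_, ?_⟩
  · refine tendsto_const_nhds.congr' ?_
    filter_upwards [Filter.eventually_ge_atTop k1] with k hk
    rw [hnu, hk1 k hk]
  · have h3 := hk2 (max k1 k2) (le_max_right _ _)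
    rw [hk1 _ (le_max_left _ _)] at h3
    refine le_trans ?_ h3
    have hp1 : (1 : ℝ) ≤ p := by exact_mod_cast hp.one_le
    have hc : 0 ≤ 1 - 1 / (p : ℝ) := by
      rw [sub_nonneg, div_le_one (by positivity)]; exact hp1
    refine mul_le_mul_of_nonneg_right ?_ hc
    have hcast : (-((A.det.natAbs.factorization p / 2 : ℕ) : ℝ)) = ((-((A.det.natAbs.factorization p / 2 : ℕ) : ℤ) : ℤ) : ℝ) := by
      push_cast; rfl
    rw [hcast, Real.rpow_intCast]
    refine zpow_le_zpow_right₀ hp1 ?_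
    rw [hsum]
    unfold gex
    split_ifs <;> omega
end
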